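/- arXiv:0905.0412 — 4 statements merged into one kernel-verified Lean document; each statement's English description precedes it below -/
import Mathlib

section
/- For indeterminates u, q and integers i ≥ j ≥ k, define A_{ij}(u,v) = (u/v)^j · ((u/v;q)_{i-j}/(q;q)_{i-j}) · ((u;q)_{i+j}/(v q;q)_{i+j}) · (1-v q^{2j})/(1-v). Then the infinite lower-triangular matrices A(u,v) and A(v,u) are mutually inverse: ∑_{j with i ≥ j ≥ k} A_{ij}(u,v) A_{jk}(v,u) = δ_{ik}. -/
open Finset

/-- The q-Pochhammer symbol extended to integer index:
`(x;q)_k = ∏_{j=0}^{k-1}(1-xq^j)` for `k ≥ 0`, and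
`(x;q)_{-m} = 1/∏_{j=1}^{m}(1-xq^{-j})` for `m > 0`. -/
noncomputable def qPochZ {F : Type*} [Field F] (x q : F) (k : ℤ) : F :=
  if 0 ≤ k then ∏ j ∈ Finset.range k.toNat, (1 - x * q ^ (j : ℤ))
  else (∏ j ∈ Finset.range (-k).toNat, (1 - x * q ^ (-(j : ℤ) - 1)))⁻¹

/-- Bressoud's matrix entries
`A_{ij}(u,v) = (u/v)^j ((u/v;q)_{i-j}/(q;q)_{i-j}) ((u;q)_{i+j}/(vq;q)_{i+j})
  (1-vq^{2j})/(1-v)`. -/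
noncomputable def bressoudA {F : Type*} [Field F] (q u v : F) (i j : ℤ) : F :=
  (u / v) ^ j * (qPochZ (u / v) q (i - j) / qPochZ q q (i - j)) *
    (qPochZ u q (i + j) / qPochZ (v * q) q (i + j)) *
    ((1 - v * q ^ (2 * j)) / (1 - v))

/-- natural-index q-Pochhammer symbol -/
noncomputable def pN {F : Type*} [Field F] (q x : F) (n : ℕ) : F :=
  ∏ j ∈ Finset.range n, (1 - x * q ^ j)

theorem pN_succ {F : Type*} [Field F] (q x : F) (n : ℕ) :
    pN q x (n + 1) = pN q x n * (1 - x * q ^ n) := by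
  simp [pN, Finset.prod_range_succ]

theorem pN_succ' {F : Type*} [Field F] (q x : F) (n : ℕ) :
    pN q x (n + 1) = (1 - x) * pN q (x * q) n := by
  simp only [pN, Finset.prod_range_succ']
  rw [mul_comm]
  congr 1
  · simp
  · apply Finset.prod_congr rfl
    intro j _
    ring

theorem pN_zero {F : Type*} [Field F] (q x : F) : pN q x 0 = 1 := by simp [pN]

theorem pN_ne {F : Type*} [Field F] (q x : F) (n : ℕ) (h : ∀ j : ℕ, x * q ^ j ≠ 1) :
    pN q x n ≠ 0 := by
  rw [pN, Finset.prod_ne_zero_iff]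
  intro j _
  exact sub_ne_zero.2 (h j).symm

/-- the partial sums -/
theorem partial_sum {F : Type*} [Field F] (q x V : F) (hx : x ≠ 0)
    (hq : ∀ m : ℕ, q * q ^ m ≠ 1)
    (hU : ∀ m : ℕ, x * V * q ^ m ≠ 1)
    (hV : ∀ m : ℕ, V * q ^ m ≠ 1) (N : ℕ) (m : ℕ) : ∀ l : ℕ, l + m = N + 1 →
    ∑ r ∈ Finset.range (m + 1), (x ^ r * (pN q x (N + 1 - r) * pN q x⁻¹ r)
      / (pN q q (N + 1 - r) * pN q q r) * pN q (x * V * q ^ (r + 1)) N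
      * (1 - V * q ^ (2 * r)) / pN q (V * q ^ r) (N + 2))
    = x ^ m * (pN q x l * pN q (x⁻¹ * q) m) * (1 - q ^ l) / (pN q q l * pN q q m)
      * pN q (x * V * q ^ (m + 1)) (N + 1) / pN q (V * q ^ (m + 1)) (N + 1)
      / ((1 - q * q ^ N) * (1 - x * V * q ^ (N + 1))) := by
  have hVs : ∀ s n, pN q (V * q ^ s) n ≠ 0 := fun s n => pN_ne _ _ _ fun j => by
    rw [mul_assoc, ← pow_add]; exact hV _
  have hqs : ∀ n, pN q q n ≠ 0 := fun n => pN_ne _ _ _ hq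
  have hq1 : ∀ n : ℕ, 1 - q * q ^ n ≠ 0 := fun n => sub_ne_zero.2 (hq n).symm
  have hU1 : ∀ n : ℕ, 1 - x * V * q ^ n ≠ 0 := fun n => sub_ne_zero.2 (hU n).symm
  have hV1 : ∀ n : ℕ, 1 - V * q ^ n ≠ 0 := fun n => sub_ne_zero.2 (hV n).symm
  induction m with
  | zero =>
    intro l hl
    obtain rfl : l = N + 1 := by omega
    have h1 := hqs (N + 1)
    have h2 := hVs 1 (N + 1)
    have h3 := hq1 N
    have h4 := hU1 (N + 1)
    have h5 := hV1 0
    have e1 : pN q V (N + 2) = (1 - V) * pN q (V * q ^ 1) (N + 1) := by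
      rw [pN_succ', pow_one]
    have e2 : pN q (x * V * q ^ 1) (N + 1)
        = pN q (x * V * q ^ 1) N * (1 - x * V * q ^ (N + 1)) := by
      rw [pN_succ]; ring
    simp only [zero_add, Finset.sum_range_one, pow_zero, pN_zero, Nat.sub_zero, mul_zero,
      mul_one, one_mul] at *
    rw [e1, e2]
    have e3 : 1 - q ^ (N + 1) = 1 - q * q ^ N := by ring
    rw [e3]
    generalize pN q q (N + 1) = A at *
    generalize pN q (V * q ^ 1) (N + 1) = B at *
    generalize 1 - q * q ^ N = C at *
    generalize 1 - x * V * q ^ (N + 1) = D at *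
    field_simp
  | succ m ih =>
    intro l hl
    rw [Finset.sum_range_succ, ih (l + 1) (by omega)]
    have hs : N + 1 - (m + 1) = l := by omega
    obtain rfl : N = l + m := by omega
    rw [hs]
    have a1 := pN_succ q x l
    have a2 := pN_succ q (x⁻¹ * q) m
    have a3 := pN_succ' q x⁻¹ m
    have a4 := pN_succ q q l
    have a5 := pN_succ q q m
    have a6 : pN q (x * V * q ^ (m + 1)) (l + m + 1)
      = (1 - x * V * q ^ (m + 1)) * pN q (x * V * q ^ (m + 2)) (l + m) := by
      rw [pN_succ']; ring_nf
    have a7 : pN q (x * V * q ^ (m + 2)) (l + m + 1)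
      = pN q (x * V * q ^ (m + 2)) (l + m) * (1 - x * V * q ^ (l + m + m + 2)) := by
      rw [pN_succ]; ring_nf
    have a8 : pN q (V * q ^ (m + 1)) (l + m + 1)
      = (1 - V * q ^ (m + 1)) * pN q (V * q ^ (m + 2)) (l + m) := by
      rw [pN_succ']; ring_nf
    have a9 : pN q (V * q ^ (m + 2)) (l + m + 1)
      = pN q (V * q ^ (m + 2)) (l + m) * (1 - V * q ^ (l + m + m + 2)) := by
      rw [pN_succ]; ring_nf
    have a10 : pN q (V * q ^ (m + 1)) (l + m + 2)
      = (1 - V * q ^ (m + 1)) * (pN q (V * q ^ (m + 2)) (l + m) *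
        (1 - V * q ^ (l + m + m + 2))) := by
      rw [← a9, pN_succ']; ring_nf
    rw [show m + 1 + 1 = m + 2 from rfl, a1, a2, a3, a4, a5, a6, a7, a8, a9, a10]
    have b1 := hqs l
    have b2 := hqs m
    have b3 := hq1 l
    have b4 := hq1 m
    have b5 := hVs (m + 2) (l + m)
    have b6 := hV1 (m + 1)
    have b7 := hV1 (l + m + m + 2)
    have b8 := hq1 (l + m)
    have b9 := hU1 (l + m + 1)
    generalize pN q q l = A1 at *
    generalize pN q q m = A2 at *
    generalize pN q x l = A3 at *
    generalize pN q (x⁻¹ * q) m = A4 at *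
    generalize pN q (x * V * q ^ (m + 2)) (l + m) = A5 at *
    generalize pN q (V * q ^ (m + 2)) (l + m) = A6 at *
    clear a1 a2 a3 a4 a5 a6 a7 a8 a9 a10 ih hs hl hqs hVs hq1 hU1 hV1 hq hU hV
    have c1 : q ^ (l + m + m + 2) = q ^ l * q ^ m * q ^ m * q * q := by ring
    have c2 : q ^ (l + m + 1) = q ^ l * q ^ m * q := by ring
    have c3 : q ^ (l + m) = q ^ l * q ^ m := by ring
    have c4 : q ^ (m + 1) = q ^ m * q := by ring
    have c5 : q ^ (l + 1) = q ^ l * q := by ring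
    have c6 : q ^ (2 * (m + 1)) = q ^ m * q ^ m * q * q := by ring
    have c7 : x ^ (m + 1) = x ^ m * x := by ring
    rw [c1] at b7 ⊢
    rw [c2] at b9 ⊢
    rw [c3] at b8 ⊢
    rw [c4] at b6 ⊢
    rw [c5, c6, c7]
    clear c1 c2 c3 c4 c5 c6 c7
    generalize q ^ l = L at *
    generalize q ^ m = M at *
    generalize x ^ m = X at *
    generalize h3 : 1 - q * L = D3 at *
    generalize h4 : 1 - q * M = D4 at *
    generalize h6 : 1 - V * (M * q) = D6 at *
    generalize h7 : 1 - V * (L * M * M * q * q) = D7 at *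
    generalize h8 : 1 - q * (L * M) = D8 at *
    generalize h9 : 1 - x * V * (L * M * q) = D9 at *
    field_simp
    rw [← h3, ← h4, ← h6, ← h7, ← h8, ← h9]
    ring

theorem qPochZ_natCast {F : Type*} [Field F] (x q : F) (n : ℕ) :
    qPochZ x q n = pN q x n := by
  simp [qPochZ, pN]

theorem qPochZ_succ {F : Type*} [Field F] (x q : F) (h : ∀ m : ℤ, x * q ^ m ≠ 1) (k : ℤ) :
    qPochZ x q (k + 1) = qPochZ x q k * (1 - x * q ^ k) := by
  rcases le_or_gt 0 k with hk | hk
  · lift k to ℕ using hk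
    have := pN_succ q x k
    rw [← qPochZ_natCast, ← qPochZ_natCast] at this
    push_cast at this
    rw [this]; simp
  · obtain ⟨n, rfl⟩ : ∃ n : ℕ, k = -(n : ℤ) - 1 := ⟨(-k - 1).toNat, by omega⟩
    have e : ∀ n : ℕ, qPochZ x q (-(n : ℤ))
        = (∏ j ∈ Finset.range n, (1 - x * q ^ (-(j : ℤ) - 1)))⁻¹ := by
      intro n
      rcases n with _ | n
      · simp [qPochZ]
      · rw [qPochZ, if_neg (by push_cast; omega)]
        simp only [neg_neg, Int.toNat_natCast]
    have e1 : -(n : ℤ) - 1 + 1 = -(n : ℤ) := by ring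
    have e2 : -(n : ℤ) - 1 = -((n + 1 : ℕ) : ℤ) := by push_cast; ring
    rw [e1, e]
    conv_rhs => rw [e2, e, Finset.prod_range_succ, ← e2]
    have := sub_ne_zero.2 (h (-(n : ℤ) - 1)).symm
    rw [mul_inv, mul_assoc, inv_mul_cancel₀ this, mul_one]

theorem qPochZ_ne {F : Type*} [Field F] (x q : F) (h : ∀ m : ℤ, x * q ^ m ≠ 1) (k : ℤ) :
    qPochZ x q k ≠ 0 := by
  unfold qPochZ
  split_ifs
  · rw [Finset.prod_ne_zero_iff]
    exact fun j _ => sub_ne_zero.2 (h j).symm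
  · apply inv_ne_zero
    rw [Finset.prod_ne_zero_iff]
    exact fun j _ => sub_ne_zero.2 (h _).symm

theorem qPochZ_add {F : Type*} [Field F] (x q : F) (hq0 : q ≠ 0)
    (h : ∀ m : ℤ, x * q ^ m ≠ 1) (k : ℤ) (n : ℕ) :
    qPochZ x q (k + n) = qPochZ x q k * pN q (x * q ^ k) n := by
  induction n with
  | zero => simp [pN_zero]
  | succ n ih =>
    push_cast
    rw [← add_assoc, qPochZ_succ x q h, ih, pN_succ, zpow_add₀ hq0, zpow_natCast]
    ring

theorem qPochZ_shift {F : Type*} [Field F] (x q : F) (hq0 : q ≠ 0)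
    (h : ∀ m : ℤ, x * q ^ m ≠ 1) (k : ℤ) :
    (1 - x) * qPochZ (x * q) q k = qPochZ x q (k + 1) := by
  have h' : ∀ m : ℤ, x * q * q ^ m ≠ 1 := fun m => by
    rw [mul_assoc, ← zpow_one_add₀ hq0]; exact h _
  induction k using Int.induction_on with
  | zero => simp [qPochZ]
  | succ k ih =>
    rw [qPochZ_succ _ q h', ← mul_assoc, ih, qPochZ_succ x q h (k + 1), zpow_add_one₀ hq0]
    ring
  | pred k ih =>
    have e : (-(k : ℤ)) = -(k : ℤ) - 1 + 1 := by ring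
    rw [e, qPochZ_succ _ q h', qPochZ_succ x q h (-(k : ℤ) - 1 + 1), zpow_add_one₀ hq0,
      ← mul_assoc, mul_comm (q ^ _) q, ← mul_assoc x] at ih
    exact mul_right_cancel₀ (sub_ne_zero.2 (h' _).symm) ih

/-- Bressoud's matrix inverse: the lower-triangular matrices `A(u,v)` and `A(v,u)`
are mutually inverse: `∑_{i ≥ j ≥ k} A_{ij}(u,v) A_{jk}(v,u) = δ_{ik}`. -/
theorem stmt1 {F : Type*} [Field F] (q u v : F)
    (hq0 : q ≠ 0) (hu0 : u ≠ 0) (hv0 : v ≠ 0)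
    (hq : ∀ m : ℤ, m ≠ 0 → q ^ m ≠ 1)
    (hu : ∀ m : ℤ, u * q ^ m ≠ 1)
    (hv : ∀ m : ℤ, v * q ^ m ≠ 1)
    (i k : ℤ) :
    ∑ j ∈ Finset.Icc k i, bressoudA q u v i j * bressoudA q v u j k
      = if i = k then 1 else 0 := by
  have hu1 : 1 - u ≠ 0 := sub_ne_zero.2 (by simpa using (hu 0).symm)
  have hv1 : 1 - v ≠ 0 := sub_ne_zero.2 (by simpa using (hv 0).symm)
  have su : ∀ k, qPochZ (u * q) q k = qPochZ u q (k + 1) / (1 - u) := fun k => by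
    rw [← qPochZ_shift u q hq0 hu, mul_div_cancel_left₀ _ hu1]
  have sv : ∀ k, qPochZ (v * q) q k = qPochZ v q (k + 1) / (1 - v) := fun k => by
    rw [← qPochZ_shift v q hq0 hv, mul_div_cancel_left₀ _ hv1]
  rcases lt_trichotomy i k with h | rfl | h
  · rw [Finset.Icc_eq_empty (by omega), if_neg (by omega), Finset.sum_empty]
  · rw [Finset.Icc_self, Finset.sum_singleton, if_pos rfl]
    have z : ∀ x : F, qPochZ x q 0 = 1 := fun x => by simp [qPochZ]
    simp only [bressoudA, sub_self, z, su, sv, qPochZ_succ u q hu, qPochZ_succ v q hv]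
    have c1 := qPochZ_ne u q hu (i + i)
    have c2 := qPochZ_ne v q hv (i + i)
    have c3 := sub_ne_zero.2 (hu (i + i)).symm
    have c4 := sub_ne_zero.2 (hv (i + i)).symm
    have c5 : (u / v) ^ i * (v / u) ^ i = 1 := by
      rw [← mul_zpow, div_mul_div_cancel₀ hv0, div_self hu0, one_zpow]
    rw [two_mul]
    generalize q ^ (i + i) = Q at *
    calc _ = (u / v) ^ i * (v / u) ^ i := by field_simp
      _ = 1 := c5
  · rw [if_neg (by omega)]
    obtain ⟨N, rfl⟩ : ∃ N : ℕ, i = k + (N + 1 : ℕ) := ⟨(i - k - 1).toNat, by push_cast; omega⟩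
    have himg : Finset.Icc k (k + (N + 1 : ℕ))
        = (Finset.range (N + 2)).image (fun r : ℕ => k + (r : ℤ)) := by
      ext j
      simp only [Finset.mem_Icc, Finset.mem_image, Finset.mem_range]
      constructor
      · intro hj
        exact ⟨(j - k).toNat, by omega, by omega⟩
      · rintro ⟨r, hr, rfl⟩
        omega
    rw [himg, Finset.sum_image (fun a _ b _ hab => by simpa using hab)]
    have hxV : u / v * (v * q ^ (2 * k)) = u * q ^ (2 * k) := by field_simp
    have key := partial_sum q (u / v) (v * q ^ (2 * k)) (div_ne_zero hu0 hv0)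
      (fun m => by have := hq (m + 1) (by omega); rwa [zpow_add_one₀ hq0, mul_comm, zpow_natCast] at this)
      (fun m => by
        rw [hxV, mul_assoc, ← zpow_natCast, ← zpow_add₀ hq0]; exact hu _)
      (fun m => by
        rw [mul_assoc, ← zpow_natCast, ← zpow_add₀ hq0]; exact hv _)
      N (N + 1) 0 (by omega)
    rw [pow_zero, sub_self, mul_zero, zero_div, zero_mul, zero_div, zero_div] at key
    rw [← mul_zero (1 - u * q ^ (2 * k)), ← key, Finset.mul_sum]
    apply Finset.sum_congr rfl
    intro r hr
    have hr' : r ≤ N + 1 := by have := Finset.mem_range.1 hr; omega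
    have d1 : k + ((N + 1 : ℕ) : ℤ) - (k + r) = ((N + 1 - r : ℕ) : ℤ) := by
      rw [Nat.cast_sub hr']; ring
    have d2 : k + (r : ℤ) - k = (r : ℤ) := by ring
    have d3 : qPochZ u q (k + ((N + 1 : ℕ) : ℤ) + (k + r))
        = qPochZ u q (k + r + k + 1) * pN q (u * q ^ (2 * k) * q ^ (r + 1)) N := by
      rw [show k + ((N + 1 : ℕ) : ℤ) + (k + r) = k + r + k + 1 + (N : ℤ) by push_cast; ring,
        qPochZ_add u q hq0 hu, mul_assoc u, ← zpow_natCast q (r + 1), ← zpow_add₀ hq0]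
      congr 4
      push_cast; ring
    have d4 : qPochZ v q (k + ((N + 1 : ℕ) : ℤ) + (k + r) + 1)
        = qPochZ v q (k + r + k) * pN q (v * q ^ (2 * k) * q ^ r) (N + 2) := by
      rw [show k + ((N + 1 : ℕ) : ℤ) + (k + r) + 1 = k + r + k + ((N + 2 : ℕ) : ℤ) by
        push_cast; ring,
        qPochZ_add v q hq0 hv, mul_assoc v, ← zpow_natCast q r, ← zpow_add₀ hq0]
      congr 4
      ring
    have d5 : q ^ (2 * (k + (r : ℤ))) = q ^ (2 * k) * q ^ (2 * r) := by
      rw [mul_add, zpow_add₀ hq0]; norm_cast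
    have d6 : (u / v) ^ (k + (r : ℤ)) * (v / u) ^ k = (u / v) ^ r := by
      rw [zpow_add₀ (div_ne_zero hu0 hv0), mul_right_comm, ← mul_zpow,
        div_mul_div_cancel₀ hv0, div_self hu0, one_zpow, one_mul, zpow_natCast]
    have c1 := qPochZ_ne u q hu (k + r + k + 1)
    have c2 := qPochZ_ne v q hv (k + r + k)
    have c3 := qPochZ_ne v q hv (k + ((N + 1 : ℕ) : ℤ) + (k + r) + 1)
    rw [d4] at c3
    have c4 := right_ne_zero_of_mul c3
    simp only [bressoudA, su, sv, d1, d2, d3, d4, d5, qPochZ_natCast]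
    rw [← d6, hxV, inv_div, ← mul_assoc v]
    generalize pN q (v * q ^ (2 * k) * q ^ r) (N + 2) = B1 at *
    generalize qPochZ v q (k + r + k) = B2 at *
    generalize qPochZ u q (k + r + k + 1) = B3 at *
    generalize (u / v) ^ (k + (r : ℤ)) = B4 at *
    generalize (v / u) ^ k = B5 at *
    generalize pN q (u / v) (N + 1 - r) = B6 at *
    generalize pN q (v / u) r = B7 at *
    generalize pN q q (N + 1 - r) = B8 at *
    generalize pN q q r = B9 at *
    generalize pN q (u * q ^ (2 * k) * q ^ (r + 1)) N = B10 at *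
    generalize q ^ (2 * k) = K at *
    generalize q ^ (2 * r) = R at *
    clear su sv
    field_simp
end

section
/- Define f_{ij} = (u/v)^{i-j} · ((v/u;q)_{i-j}/(q;q)_{i-j}) · ((v q^{2j};q)_{i-j}/(u q^{2j+1};q)_{i-j}) · (1-v q^{2i})/(1-v q^{2j}) and g_{kl} = ((u/v;q)_{k-l}/(q;q)_{k-l}) · ((v q^{k+l+1};q)_{k-l}/(u q^{k+l};q)_{k-l}). Then the lower-triangular matrices (f_{ij}) and (g_{kl}) are mutually inverse: ∑_{j with i ≥ j ≥ k} f_{ij} g_{jk} = δ_{ik}. -/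
open Finset

/-- The q-Pochhammer symbol `(x;q)_k = ∏_{j=0}^{k-1} (1 - x q^j)`. -/
def qPoch {F : Type*} [Field F] (x q : F) (k : ℕ) : F :=
  ∏ j ∈ Finset.range k, (1 - x * q ^ j)

/-- `f_{ij} = (u/v)^{i-j} ((v/u;q)_{i-j}/(q;q)_{i-j})
  ((vq^{2j};q)_{i-j}/(uq^{2j+1};q)_{i-j}) (1-vq^{2i})/(1-vq^{2j})`. -/
noncomputable def fMat {F : Type*} [Field F] (q u v : F) (i j : ℤ) : F :=
  (u / v) ^ (i - j) *
    (qPoch (v / u) q (i - j).toNat / qPoch q q (i - j).toNat) *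
    (qPoch (v * q ^ (2 * j)) q (i - j).toNat / qPoch (u * q ^ (2 * j + 1)) q (i - j).toNat) *
    ((1 - v * q ^ (2 * i)) / (1 - v * q ^ (2 * j)))

/-- `g_{kl} = ((u/v;q)_{k-l}/(q;q)_{k-l}) ((vq^{k+l+1};q)_{k-l}/(uq^{k+l};q)_{k-l})`. -/
noncomputable def gMat {F : Type*} [Field F] (q u v : F) (k l : ℤ) : F :=
  (qPoch (u / v) q (k - l).toNat / qPoch q q (k - l).toNat) *
    (qPoch (v * q ^ (k + l + 1)) q (k - l).toNat / qPoch (u * q ^ (k + l)) q (k - l).toNat)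

lemma qPoch_add {F : Type*} [Field F] (x q : F) (a b : ℕ) :
    qPoch x q (a + b) = qPoch x q a * qPoch (x * q ^ a) q b := by
  unfold qPoch
  rw [Finset.prod_range_add]
  congr 1
  apply Finset.prod_congr rfl
  intro j _
  rw [pow_add]; ring

lemma qPoch_one {F : Type*} [Field F] (x q : F) : qPoch x q 1 = 1 - x := by
  simp [qPoch]

lemma qPoch_zero {F : Type*} [Field F] (x q : F) : qPoch x q 0 = 1 := by
  simp [qPoch]

lemma qPoch_succ {F : Type*} [Field F] (x q : F) (a : ℕ) :
    qPoch x q (a + 1) = qPoch x q a * (1 - x * q ^ a) := by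
  rw [qPoch_add, qPoch_one]

lemma qPoch_succ' {F : Type*} [Field F] (x q : F) (a : ℕ) :
    qPoch x q (a + 1) = (1 - x) * qPoch (x * q) q a := by
  rw [add_comm, qPoch_add, qPoch_one, pow_one]

lemma qPoch_ne {F : Type*} [Field F] (x q : F) (a : ℕ)
    (h : ∀ j : ℕ, x * q ^ j ≠ 1) : qPoch x q a ≠ 0 := by
  unfold qPoch
  rw [Finset.prod_ne_zero_iff]
  intro j _ h0
  exact h j (sub_eq_zero.1 h0).symm

/-- Simplified summand, with `n = m + r`, `n = s + 1`. -/
noncomputable def tTerm {F : Type*} [Field F] (q u v : F) (s m r : ℕ) : F :=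
  (u / v) ^ r * qPoch (v / u) q r * qPoch (u / v) q m / (qPoch q q r * qPoch q q m) *
    (1 - u * q ^ (2 * m)) * qPoch (v * q ^ (m + 1)) q s / qPoch (u * q ^ m) q (s + 2)

/-- Closed form of the partial sums. -/
noncomputable def pTerm {F : Type*} [Field F] (q u v : F) (s m r : ℕ) : F :=
  (u / v) ^ r * qPoch (v / u) q r * qPoch (u / v * q) q m * (1 - q ^ r) *
    qPoch (v * q ^ (m + 1)) q (s + 1) /
    (qPoch q q r * qPoch q q m * qPoch (u * q ^ (m + 1)) q (s + 1) *
      (1 - q ^ (s + 1)) * (1 - v * q ^ (s + 1)))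

lemma pTerm_zero {F : Type*} [Field F] (q u v : F)
    (hq : ∀ m : ℕ, q * q ^ m ≠ 1)
    (hu : ∀ m : ℕ, u * q ^ m ≠ 1)
    (hv : ∀ m : ℕ, v * q ^ m ≠ 1) (s : ℕ) :
    tTerm q u v s 0 (s + 1) = pTerm q u v s 0 (s + 1) := by
  have h1 : qPoch q q (s + 1) ≠ 0 := qPoch_ne _ _ _ hq
  have h2 : qPoch (u * q) q (s + 1) ≠ 0 := qPoch_ne _ _ _ (fun j => by
    have := hu (j + 1); rwa [pow_succ', ← mul_assoc] at this)
  have h3 : 1 - q ^ (s + 1) ≠ 0 := fun h => hq s (by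
    rw [← pow_succ']; exact (sub_eq_zero.1 h).symm)
  have h4 : 1 - v * q ^ (s + 1) ≠ 0 := fun h => hv (s + 1) (sub_eq_zero.1 h).symm
  have h5 : 1 - u ≠ 0 := fun h => hu 0 (by simpa using (sub_eq_zero.1 h).symm)
  unfold tTerm pTerm
  rw [show s + 2 = (s + 1) + 1 from rfl, qPoch_succ' (u * q ^ 0) q (s + 1),
    qPoch_succ (v * q ^ (0 + 1)) q s]
  simp only [qPoch_zero, pow_zero, mul_one, mul_zero, zero_add, pow_one]
  rw [show v * q * q ^ s = v * q ^ (s + 1) by ring]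
  generalize qPoch q q (s + 1) = A at *
  generalize qPoch (u * q) q (s + 1) = B at *
  generalize q ^ (s + 1) = C at *
  generalize (u / v) ^ (s + 1) = D
  field_simp

lemma pTerm_step {F : Type*} [Field F] (q u v : F)
    (hu0 : u ≠ 0) (hv0 : v ≠ 0)
    (hq : ∀ m : ℕ, q * q ^ m ≠ 1)
    (hu : ∀ m : ℕ, u * q ^ m ≠ 1)
    (hv : ∀ m : ℕ, v * q ^ m ≠ 1) (m r : ℕ) :
    pTerm q u v (m + r) m (r + 1) + tTerm q u v (m + r) (m + 1) r
      = pTerm q u v (m + r) (m + 1) r := by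
  have h1 : ∀ a, qPoch q q a ≠ 0 := fun a => qPoch_ne _ _ _ hq
  have h1' : ∀ a, 1 - q * q ^ a ≠ 0 := fun a h => hq a (sub_eq_zero.1 h).symm
  have h2 : qPoch (u * q ^ (m + 2)) q (m + r) ≠ 0 := qPoch_ne _ _ _ (fun j => by
    have := hu (m + 2 + j); rwa [pow_add, ← mul_assoc] at this)
  have h4 : 1 - v * q ^ (m + r + 1) ≠ 0 := fun h => hv _ (sub_eq_zero.1 h).symm
  have h5 : ∀ a, 1 - u * q ^ a ≠ 0 := fun a h => hu a (sub_eq_zero.1 h).symm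
  have h3 := h1' (m + r)
  have h6 := h5 (m + 1)
  have h7 := h5 (m + 1 + (m + r + 1))
  have e1 : qPoch (u * q ^ (m + 1)) q (m + r + 2) =
      (1 - u * q ^ (m + 1)) * (qPoch (u * q ^ (m + 2)) q (m + r) *
        (1 - u * q ^ (m + 1 + (m + r + 1)))) := by
    rw [qPoch_succ', qPoch_succ]; ring_nf
  have e2 : qPoch (u * q ^ (m + 1)) q (m + r + 1) =
      (1 - u * q ^ (m + 1)) * qPoch (u * q ^ (m + 2)) q (m + r) := by
    rw [qPoch_succ']; ring_nf
  have e3 : qPoch (u * q ^ (m + 1 + 1)) q (m + r + 1) =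
      qPoch (u * q ^ (m + 2)) q (m + r) * (1 - u * q ^ (m + 1 + (m + r + 1))) := by
    rw [qPoch_succ]; ring_nf
  have e4 : qPoch (v * q ^ (m + 1)) q (m + r + 1) =
      (1 - v * q ^ (m + 1)) * qPoch (v * q ^ (m + 2)) q (m + r) := by
    rw [qPoch_succ']; ring_nf
  have e5 : qPoch (v * q ^ (m + 1 + 1)) q (m + r + 1) =
      qPoch (v * q ^ (m + 2)) q (m + r) * (1 - v * q ^ (m + 1 + (m + r + 1))) := by
    rw [qPoch_succ]; ring_nf
  unfold tTerm pTerm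
  rw [e1, e2, e3, e4, e5, qPoch_succ (v / u), qPoch_succ' (u / v), qPoch_succ (u / v * q),
    qPoch_succ q q r, qPoch_succ q q m, show m + 1 + 1 = m + 2 from rfl]
  have a1 := h1 m
  have a2 := h1 r
  have a3 := h1' m
  have a4 := h1' r
  generalize qPoch q q m = A at *
  generalize qPoch q q r = B at *
  generalize qPoch (u * q ^ (m + 2)) q (m + r) = C at *
  generalize qPoch (v * q ^ (m + 2)) q (m + r) = D at *
  generalize qPoch (v / u) q r = E at *
  generalize qPoch (u / v * q) q m = G at *
  rw [pow_succ (u / v) r]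
  generalize (u / v) ^ r = H at *
  clear e1 e2 e3 e4 e5 h1 h1' h5 hq hu hv
  have p2 : q ^ (m + r + 1) = q * (q ^ m * q ^ r) := by ring
  have p3 : q ^ (m + r) = q ^ m * q ^ r := by ring
  have p4 : q ^ (m + 1 + (m + r + 1)) = q ^ 2 * ((q ^ m) ^ 2 * q ^ r) := by ring
  have p5 : q ^ (2 * (m + 1)) = q ^ 2 * (q ^ m) ^ 2 := by ring
  rw [p2] at h4
  rw [p3] at h3
  rw [p4] at h7
  rw [pow_succ' q m] at h6
  rw [p2, p4, p5, pow_succ' q m, pow_succ' q r]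
  clear p2 p3 p4 p5
  generalize q ^ m = x at *
  generalize q ^ r = y at *
  rw [show u / v * q * x = u / v * (q * x) by ring]
  generalize hz1 : 1 - u * (q ^ 2 * (x ^ 2 * y)) = z1 at *
  generalize hz2 : 1 - u * (q * x) = z2 at *
  generalize hz3 : 1 - v * (q * (x * y)) = z3 at *
  generalize hz4 : 1 - q * (x * y) = z4 at *
  generalize hz5 : 1 - q * x = z5 at *
  generalize hz6 : 1 - q * y = z6 at *
  field_simp
  subst hz1 hz2 hz3 hz4 hz5 hz6
  ring

lemma sum_t {F : Type*} [Field F] (q u v : F)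
    (hu0 : u ≠ 0) (hv0 : v ≠ 0)
    (hq : ∀ m : ℕ, q * q ^ m ≠ 1)
    (hu : ∀ m : ℕ, u * q ^ m ≠ 1)
    (hv : ∀ m : ℕ, v * q ^ m ≠ 1) (s N : ℕ) (hN : N ≤ s + 1) :
    ∑ m ∈ Finset.range (N + 1), tTerm q u v s m (s + 1 - m) = pTerm q u v s N (s + 1 - N) := by
  induction N with
  | zero => simpa using pTerm_zero q u v hq hu hv s
  | succ N ih =>
    rw [Finset.sum_range_succ, ih (by omega)]
    obtain ⟨r, rfl⟩ : ∃ r, s = N + r := ⟨s - N, by omega⟩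
    have := pTerm_step q u v hu0 hv0 hq hu hv N r
    rwa [show N + r + 1 - N = r + 1 by omega, show N + r + 1 - (N + 1) = r by omega]

lemma fg_eq {F : Type*} [Field F] (q u v : F)
    (hq0 : q ≠ 0)
    (hu : ∀ m : ℤ, u * q ^ m ≠ 1)
    (hv : ∀ m : ℤ, v * q ^ m ≠ 1)
    (k : ℤ) (s m r : ℕ) (h : m + r = s + 1) :
    fMat q u v (k + (s + 1 : ℕ)) (k + m) * gMat q u v (k + m) k =
      (1 - v * q ^ (2 * k) * q ^ (2 * (s + 1))) *
        tTerm q (u * q ^ (2 * k)) (v * q ^ (2 * k)) s m r := by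
  have hk : q ^ (2 * k) ≠ 0 := zpow_ne_zero _ hq0
  have d1 : (k + (s + 1 : ℕ) : ℤ) - (k + m) = (r : ℕ) := by omega
  have d2 : (k + m : ℤ) - k = (m : ℕ) := by omega
  have z1 : q ^ (2 * (k + m : ℤ)) = q ^ (2 * k) * q ^ (2 * m) := by
    rw [mul_add, zpow_add₀ hq0]; norm_cast
  have z2 : q ^ (2 * (k + m : ℤ) + 1) = q ^ (2 * k) * q ^ (2 * m + 1) := by
    rw [mul_add, add_assoc, zpow_add₀ hq0]; norm_cast
  have z3 : q ^ (2 * (k + (s + 1 : ℕ) : ℤ)) = q ^ (2 * k) * q ^ (2 * (s + 1)) := by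
    rw [mul_add, zpow_add₀ hq0]; norm_cast
  have z4 : q ^ (k + m + k + 1 : ℤ) = q ^ (2 * k) * q ^ (m + 1) := by
    rw [show (k + m + k + 1 : ℤ) = 2 * k + (m + 1 : ℕ) by push_cast; ring, zpow_add₀ hq0]
    norm_cast
  have z5 : q ^ (k + m + k : ℤ) = q ^ (2 * k) * q ^ m := by
    rw [show (k + m + k : ℤ) = 2 * k + (m : ℕ) by ring, zpow_add₀ hq0]
    norm_cast
  have hu' : ∀ j : ℕ, u * q ^ (2 * k) * q ^ j ≠ 1 := fun j => by
    have := hu (2 * k + j)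
    rwa [zpow_add₀ hq0, zpow_natCast, ← mul_assoc] at this
  have hv' : ∀ j : ℕ, v * q ^ (2 * k) * q ^ j ≠ 1 := fun j => by
    have := hv (2 * k + j)
    rwa [zpow_add₀ hq0, zpow_natCast, ← mul_assoc] at this
  unfold fMat gMat tTerm
  rw [d1, d2, z1, z2, z3, z4, z5, mul_div_mul_right _ _ hk, mul_div_mul_right _ _ hk]
  simp only [Int.toNat_natCast, zpow_natCast, ← mul_assoc]
  generalize u * q ^ (2 * k) = U at *
  generalize v * q ^ (2 * k) = V at *
  have n1 : 1 - V * q ^ (2 * m) ≠ 0 := fun h => hv' _ (sub_eq_zero.1 h).symm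
  have n2 : 1 - U * q ^ (2 * m) ≠ 0 := fun h => hu' _ (sub_eq_zero.1 h).symm
  have E1 : qPoch (V * q ^ (m + 1)) q m * qPoch (V * q ^ (2 * m)) q r =
      (1 - V * q ^ (2 * m)) * qPoch (V * q ^ (m + 1)) q s := by
    have a := qPoch_add (V * q ^ m) q m r
    rw [h, show V * q ^ m * q ^ m = V * q ^ (2 * m) by ring, qPoch_succ'] at a
    have b := qPoch_succ' (V * q ^ m) q m
    rw [qPoch_succ, show V * q ^ m * q ^ m = V * q ^ (2 * m) by ring] at b
    rw [show V * q ^ m * q = V * q ^ (m + 1) by ring] at a b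
    have n3 : 1 - V * q ^ m ≠ 0 := fun h => hv' _ (sub_eq_zero.1 h).symm
    apply mul_left_cancel₀ n3
    linear_combination (1 - V * q ^ (2 * m)) * (-a) - qPoch (V * q ^ (2 * m)) q r * b
  have E2 : qPoch (U * q ^ m) q (s + 2) = qPoch (U * q ^ m) q m * (1 - U * q ^ (2 * m)) *
      qPoch (U * q ^ (2 * m + 1)) q r := by
    rw [show s + 2 = m + (r + 1) by omega, qPoch_add, qPoch_succ']
    ring_nf
  rw [E2]
  have n4 : qPoch (U * q ^ m) q m ≠ 0 := qPoch_ne _ _ _ (fun j => by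
    have := hu' (m + j); rwa [pow_add, ← mul_assoc] at this)
  have n5 : qPoch (U * q ^ (2 * m + 1)) q r ≠ 0 := qPoch_ne _ _ _ (fun j => by
    have := hu' (2 * m + 1 + j); rwa [pow_add, ← mul_assoc] at this)
  have E3 : qPoch (V * q ^ (m + 1)) q s =
      qPoch (V * q ^ (m + 1)) q m * qPoch (V * q ^ (2 * m)) q r / (1 - V * q ^ (2 * m)) := by
    rw [E1]; field_simp
  rw [E3]
  generalize qPoch (U * q ^ (2 * m + 1)) q r = A at *
  generalize qPoch (U * q ^ m) q m = B at *
  generalize 1 - U * q ^ (2 * m) = C at *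
  generalize (u / v) ^ r = H
  generalize qPoch (u / v) q m = I
  generalize qPoch (v / u) q r = J
  have e : C / (B * C * A) = 1 / (B * A) := by field_simp
  have key : (1 - V * q ^ (2 * (s + 1))) * (H * J * I / (qPoch q q r * qPoch q q m) *
     (qPoch (V * q ^ (m + 1)) q m * qPoch (V * q ^ (2 * m)) q r / (1 - V * q ^ (2 * m)))) *
     (C / (B * C * A)) = (1 - V * q ^ (2 * (s + 1))) *
      (H * J * I / (qPoch q q r * qPoch q q m) *
     (qPoch (V * q ^ (m + 1)) q m * qPoch (V * q ^ (2 * m)) q r / (1 - V * q ^ (2 * m)))) *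
     (1 / (B * A)) := by rw [e]
  refine Eq.trans ?_ (key.symm.trans ?_)
  · ring
  · simp only [div_eq_mul_inv]
    ring

theorem stmt2 {F : Type*} [Field F] (q u v : F)
    (hq0 : q ≠ 0) (hu0 : u ≠ 0) (hv0 : v ≠ 0)
    (hq : ∀ m : ℤ, m ≠ 0 → q ^ m ≠ 1)
    (hu : ∀ m : ℤ, u * q ^ m ≠ 1)
    (hv : ∀ m : ℤ, v * q ^ m ≠ 1)
    (i k : ℤ) :
    ∑ j ∈ Finset.Icc k i, fMat q u v i j * gMat q u v j k
      = if i = k then 1 else 0 := by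
  rcases lt_trichotomy i k with h | h | h
  · rw [Finset.Icc_eq_empty (by omega), if_neg (by omega), Finset.sum_empty]
  · subst h
    have : 1 - v * q ^ (2 * i) ≠ 0 := fun h => hv _ (sub_eq_zero.1 h).symm
    simp [fMat, gMat, qPoch_zero, div_self this]
  · rw [if_neg (by omega)]
    obtain ⟨s, rfl⟩ : ∃ s : ℕ, i = k + (s + 1 : ℕ) := ⟨(i - k - 1).toNat, by omega⟩
    have hk : q ^ (2 * k) ≠ 0 := zpow_ne_zero _ hq0
    have hu' : ∀ j : ℕ, u * q ^ (2 * k) * q ^ j ≠ 1 := fun j => by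
      have := hu (2 * k + j)
      rwa [zpow_add₀ hq0, zpow_natCast, ← mul_assoc] at this
    have hv' : ∀ j : ℕ, v * q ^ (2 * k) * q ^ j ≠ 1 := fun j => by
      have := hv (2 * k + j)
      rwa [zpow_add₀ hq0, zpow_natCast, ← mul_assoc] at this
    have hq' : ∀ j : ℕ, q * q ^ j ≠ 1 := fun j => by
      have := hq (j + 1 : ℕ) (by omega)
      rwa [zpow_natCast, pow_succ'] at this
    have hs : ∑ j ∈ Finset.Icc k (k + (s + 1 : ℕ)),
        fMat q u v (k + (s + 1 : ℕ)) j * gMat q u v j k =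
        ∑ m ∈ Finset.range (s + 1 + 1),
          fMat q u v (k + (s + 1 : ℕ)) (k + m) * gMat q u v (k + m) k := by
      symm
      apply Finset.sum_bij (fun (m : ℕ) _ => k + (m : ℤ))
      · intro a ha
        simp only [Finset.mem_range, Finset.mem_Icc] at *
        omega
      · intro a _ b _ hab
        omega
      · intro b hb
        simp only [Finset.mem_Icc] at hb
        exact ⟨(b - k).toNat, by simp only [Finset.mem_range]; omega, by omega⟩
      · intro a _
        rfl
    rw [hs]
    have := sum_t q (u * q ^ (2 * k)) (v * q ^ (2 * k)) (mul_ne_zero hu0 hk)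
      (mul_ne_zero hv0 hk) hq' hu' hv' s (s + 1) le_rfl
    rw [Finset.sum_congr rfl (fun m hm => fg_eq q u v hq0 hu hv k s m (s + 1 - m)
      (by rw [Finset.mem_range] at hm; omega)), ← Finset.mul_sum, this]
    simp [pTerm]
end

section
/- Let x_1,…,x_n, u_1,…,u_r, t be indeterminates with r and n nonnegative integers. For f a rational function in the x_i, let T_i f denote the substitution x_i → 1/x_i, and T = (1+T_1)⋯(1+T_n). Let Φ = ∏_{i=1}^n (1-t x_i^2)/(1-x_i^2) · ∏_{1≤i<j≤n} (1-t x_i x_j)/(1-x_i x_j), and R(u) = ∏_{i=1}^n ((1-t u x_i)/(1-u x_i)) · ((1-t u/x_i)/(1-u/x_i)). Then T( Φ · ∏_{k=1}^r ∏_{i=1}^n (1-t u_k/x_i)/(1-u_k/x_i) ) = (-t;t)_{n-r} · ∑_{I ⊆ {1,…,r}} c_I ∏_{i∈I} R(u_i), where c_I = t^{n(r-|I|)} ∏_{1≤i<j≤r} (1-v_i v_j)/(1-t v_i v_j), with v_i = u_i if i∈I and v_i = 1/(t u_i) if i∉I, and where (-t;t)_{n-r} means ∏_{k=1}^{n-r}(t^k+1)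 if n ≥ r and ∏_{k=0}^{r-n-1}(t^{-k}+1)^{-1} if n < r. -/
open Finset

/-- `x_i^{σ_i}`: the variable `x i` raised to the sign `σ i` (`true` = `+1`). -/
def sgnVar {F : Type*} [Field F] {n : ℕ} (x : Fin n → F) (σ : Fin n → Bool) (i : Fin n) : F :=
  if σ i then x i else (x i)⁻¹

/-- `Φ = ∏_i (1-tx_i²)/(1-x_i²) ∏_{i<j} (1-tx_ix_j)/(1-x_ix_j)`. -/
def PhiC {F : Type*} [Field F] {n : ℕ} (t : F) (x : Fin n → F) : F :=
  (∏ i, (1 - t * x i ^ 2) / (1 - x i ^ 2)) *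
    ∏ i, ∏ j ∈ Finset.Ioi i, (1 - t * x i * x j) / (1 - x i * x j)

/-- `R(u) = ∏_i ((1-tux_i)/(1-ux_i)) ((1-tu/x_i)/(1-u/x_i))`. -/
def RC {F : Type*} [Field F] {n : ℕ} (t : F) (x : Fin n → F) (u : F) : F :=
  ∏ i, ((1 - t * u * x i) / (1 - u * x i)) * ((1 - t * u / x i) / (1 - u / x i))

section helpers
open Polynomial

/-- `f` is a polynomial function of degree at most `N`. -/
def IsPD {F : Type*} [Field F] (N : ℕ) (f : F → F) : Prop :=
  ∃ p : F[X], p.natDegree ≤ N ∧ ∀ z, f z = p.eval z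

theorem IsPD.quad {F : Type*} [Field F] {f : F → F} (a b c : F)
    (h : ∀ z, f z = a + b * z + c * z ^ 2) : IsPD 2 f := by
  refine ⟨C a + C b * X + C c * X ^ 2, ?_, ?_⟩
  · compute_degree
  · intro z; rw [h]; simp

theorem IsPD.mul {F : Type*} [Field F] {f g : F → F} {M N : ℕ} (hf : IsPD M f) (hg : IsPD N g) :
    IsPD (M + N) (fun z => f z * g z) := by
  obtain ⟨p, hp, hp'⟩ := hf
  obtain ⟨q, hq, hq'⟩ := hg
  refine ⟨p * q, natDegree_mul_le.trans (by omega), fun z => ?_⟩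
  simp [hp', hq']

theorem IsPD.cmul {F : Type*} [Field F] {f : F → F} {M : ℕ} (a : F) (hf : IsPD M f) :
    IsPD M (fun z => a * f z) := by
  obtain ⟨p, hp, hp'⟩ := hf
  refine ⟨C a * p, (natDegree_C_mul_le _ _).trans hp, fun z => ?_⟩
  simp [hp']

theorem IsPD.add {F : Type*} [Field F] {f g : F → F} {M : ℕ} (hf : IsPD M f) (hg : IsPD M g) :
    IsPD M (fun z => f z + g z) := by
  obtain ⟨p, hp, hp'⟩ := hf
  obtain ⟨q, hq, hq'⟩ := hg
  refine ⟨p + q, natDegree_add_le_of_degree_le hp hq, fun z => ?_⟩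
  simp [hp', hq']

theorem IsPD.sub {F : Type*} [Field F] {f g : F → F} {M : ℕ} (hf : IsPD M f) (hg : IsPD M g) :
    IsPD M (fun z => f z - g z) := by
  have := hf.add (hg.cmul (-1))
  simpa [sub_eq_add_neg] using this

theorem IsPD.sum {F : Type*} [Field F] {α : Type*} (S : Finset α) {f : α → F → F} {M : ℕ}
    (hf : ∀ i ∈ S, IsPD M (f i)) : IsPD M (fun z => ∑ i ∈ S, f i z) := by
  classical
  induction S using Finset.induction_on with
  | empty => exact ⟨0, by simp, by simp⟩
  | insert a S ha ih =>
    simp only [Finset.sum_insert ha]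
    exact (hf a (by simp)).add (ih fun i hi => hf i (by simp [hi]))

theorem IsPD.prod {F : Type*} [Field F] {α : Type*} (S : Finset α) {f : α → F → F}
    (hf : ∀ i ∈ S, IsPD 2 (f i)) : IsPD (2 * S.card) (fun z => ∏ i ∈ S, f i z) := by
  classical
  induction S using Finset.induction_on with
  | empty => exact ⟨1, by simp, by simp⟩
  | insert a S ha ih =>
    simp only [Finset.prod_insert ha, Finset.card_insert_of_notMem ha]
    have := (hf a (by simp)).mul (ih fun i hi => hf i (by simp [hi]))
    rwa [show 2 * (S.card + 1) = 2 + 2 * S.card by ring]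

theorem IsPD.eq_zero {F : Type*} [Field F] {f : F → F} {N : ℕ} (hf : IsPD N f)
    {α : Type*} [Fintype α] (w : α → F) (hw : Function.Injective w) (h0 : ∀ i, f (w i) = 0)
    (hc : N < Fintype.card α) (z : F) : f z = 0 := by
  obtain ⟨p, hp, hp'⟩ := hf
  have : p = 0 := Polynomial.eq_zero_of_natDegree_lt_card_of_eval_eq_zero p hw
    (fun i => by rw [← hp', h0]) (by omega)
  simp [hp', this]

/-- product over pairs `i < j` -/
def PP {F : Type*} [Field F] {ι : Type*} [LinearOrder ι] (S : Finset ι) (f : ι → ι → F) : F :=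
  ∏ i ∈ S, ∏ j ∈ S, if i < j then f i j else 1

theorem PP_congr {F : Type*} [Field F] {ι : Type*} [LinearOrder ι] (S : Finset ι)
    {f g : ι → ι → F} (h : ∀ i ∈ S, ∀ j ∈ S, f i j = g i j) : PP S f = PP S g := by
  unfold PP
  refine Finset.prod_congr rfl fun i hi => Finset.prod_congr rfl fun j hj => ?_
  rw [h i hi j hj]

theorem PP_insert {F : Type*} [Field F] {ι : Type*} [LinearOrder ι] (S : Finset ι)
    {a : ι} (ha : a ∉ S) (f : ι → ι → F) (hf : ∀ i j, f i j = f j i) :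
    PP (insert a S) f = (∏ j ∈ S, f a j) * PP S f := by
  unfold PP
  rw [Finset.prod_insert ha]
  simp only [Finset.prod_insert ha, lt_irrefl, if_false, one_mul, Finset.prod_mul_distrib]
  rw [← mul_assoc, ← Finset.prod_mul_distrib]
  congr 1
  refine Finset.prod_congr rfl fun i hi => ?_
  rcases lt_trichotomy a i with h | h | h
  · simp [h, not_lt_of_gt h]
  · subst h; exact absurd hi ha
  · simp [h, not_lt_of_gt h, hf i a]

/-- sign-twisted variables -/
def yv {F : Type*} [Field F] {ι : Type*} [DecidableEq ι] (x : ι → F) (J : Finset ι) (i : ι) : F :=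
  if i ∈ J then x i else (x i)⁻¹

def vv {F : Type*} [Field F] {κ : Type*} [DecidableEq κ] (t : F) (u : κ → F) (I : Finset κ)
    (i : κ) : F :=
  if i ∈ I then u i else (t * u i)⁻¹

def gg {F : Type*} [Field F] (t a b : F) : F := (1 - a * b) / (1 - t * a * b)

theorem gg_comm {F : Type*} [Field F] (t a b : F) : gg t a b = gg t b a := by
  unfold gg; rw [mul_comm a b, mul_assoc, mul_assoc, mul_comm a b]

def Tm {F : Type*} [Field F] {ι κ : Type*} [LinearOrder ι] (t : F) (u : κ → F)
    (S : Finset ι) (U : Finset κ) (y : ι → F) : F :=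
  (∏ i ∈ S, (1 - t * y i ^ 2) / (1 - y i ^ 2)) *
    PP S (fun i j => (1 - t * y i * y j) / (1 - y i * y j)) *
    ∏ k ∈ U, ∏ i ∈ S, (1 - t * u k / y i) / (1 - u k / y i)

theorem Tm_congr {F : Type*} [Field F] {ι κ : Type*} [LinearOrder ι] (t : F) (u : κ → F)
    (S : Finset ι) (U : Finset κ) {y y' : ι → F} (h : ∀ i ∈ S, y i = y' i) :
    Tm t u S U y = Tm t u S U y' := by
  unfold Tm
  congr 1
  · congr 1
    · exact Finset.prod_congr rfl fun i hi => by rw [h i hi]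
    · exact PP_congr S fun i hi j hj => by rw [h i hi, h j hj]
  · exact Finset.prod_congr rfl fun k hk => Finset.prod_congr rfl fun i hi => by rw [h i hi]

theorem Tm_insert {F : Type*} [Field F] {ι κ : Type*} [LinearOrder ι] (t : F) (u : κ → F)
    (S : Finset ι) (U : Finset κ) (y : ι → F) {a : ι} (ha : a ∉ S) :
    Tm t u (insert a S) U y = Tm t u S U y * ((1 - t * y a ^ 2) / (1 - y a ^ 2) *
      (∏ i ∈ S, (1 - t * y a * y i) / (1 - y a * y i)) *
      ∏ k ∈ U, (1 - t * u k / y a) / (1 - u k / y a)) := by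
  unfold Tm
  rw [PP_insert S ha _ (fun i j => by rw [mul_comm (y i) (y j), mul_assoc, mul_assoc,
    mul_comm (y i) (y j)])]
  simp only [Finset.prod_insert ha, Finset.prod_mul_distrib]
  ring

theorem Tm_insert_right {F : Type*} [Field F] {ι κ : Type*} [LinearOrder ι] [DecidableEq κ]
    (t : F) (u : κ → F)
    (S : Finset ι) (U : Finset κ) (y : ι → F) {c : κ} (hc : c ∉ U) :
    Tm t u S (insert c U) y = Tm t u S U y * ∏ i ∈ S, (1 - t * u c / y i) / (1 - u c / y i) := by
  unfold Tm
  rw [Finset.prod_insert hc]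
  ring

def LH {F : Type*} [Field F] {ι κ : Type*} [LinearOrder ι] (t : F) (x : ι → F) (u : κ → F)
    (S : Finset ι) (U : Finset κ) : F :=
  ∑ J ∈ S.powerset, Tm t u S U (yv x J)

def DD {F : Type*} [Field F] {ι : Type*} (x : ι → F) (S : Finset ι) (z : F) : F :=
  ∏ i ∈ S, ((1 - z * x i) * (1 - z / x i))

def RR {F : Type*} [Field F] {ι : Type*} (t : F) (x : ι → F) (S : Finset ι) (z : F) : F :=
  DD x S (t * z) / DD x S z

def hh {F : Type*} [Field F] {ι κ : Type*} [DecidableEq κ] (t : F) (x : ι → F) (u : κ → F)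
    (S : Finset ι) (I : Finset κ) (k : κ) : F :=
  if k ∈ I then RR t x S (u k) else t ^ S.card

def RT {F : Type*} [Field F] {ι κ : Type*} [LinearOrder κ] (t : F) (x : ι → F) (u : κ → F)
    (S : Finset ι) (U : Finset κ) (I : Finset κ) : F :=
  PP U (fun i j => gg t (vv t u I i) (vv t u I j)) * ∏ k ∈ U, hh t x u S I k

def RH {F : Type*} [Field F] {ι κ : Type*} [LinearOrder κ] (t : F) (x : ι → F) (u : κ → F)
    (S : Finset ι) (U : Finset κ) : F :=
  ∑ I ∈ U.powerset, RT t x u S U I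

theorem RT_congr {F : Type*} [Field F] {ι κ : Type*} [LinearOrder κ] (t : F) (x : ι → F)
    (u : κ → F) (S : Finset ι) (U : Finset κ) {I I' : Finset κ} (h : ∀ i ∈ U, i ∈ I ↔ i ∈ I') :
    RT t x u S U I = RT t x u S U I' := by
  unfold RT
  congr 1
  · exact PP_congr U fun i hi j hj => by simp only [vv, h i hi, h j hj]
  · exact Finset.prod_congr rfl fun k hk => by simp only [hh, h k hk]

theorem RT_insert {F : Type*} [Field F] {ι κ : Type*} [LinearOrder κ] (t : F) (x : ι → F)
    (u : κ → F) (S : Finset ι) (U : Finset κ) (I : Finset κ) {c : κ} (hc : c ∉ U) :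
    RT t x u S (insert c U) I = RT t x u S U I *
      ((∏ k ∈ U, gg t (vv t u I c) (vv t u I k)) * hh t x u S I c) := by
  unfold RT
  rw [PP_insert U hc _ (fun i j => gg_comm _ _ _), Finset.prod_insert hc]
  ring

/-- cleared left side -/
def LP {F : Type*} [Field F] {ι κ : Type*} [LinearOrder ι] (t : F) (x : ι → F) (u : κ → F)
    (S : Finset ι) (U : Finset κ) (z : F) : F :=
  ∑ J ∈ S.powerset, Tm t u S U (yv x J) *
    ∏ i ∈ S, ((1 - t * z / yv x J i) * (1 - z * yv x J i))

def QQ {F : Type*} [Field F] {κ : Type*} (t : F) (u : κ → F) (U : Finset κ) (z : F) : F :=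
  ∏ k ∈ U, ((u k - z) * (1 - t * z * u k))

def AA {F : Type*} [Field F] {κ : Type*} [DecidableEq κ] (t : F) (u : κ → F) (I : Finset κ)
    (k : κ) (z : F) : F :=
  if k ∈ I then (u k - z) * (1 - u k * z) else (1 - t * z * u k) * (t * u k - z) / t

def BB {F : Type*} [Field F] {κ : Type*} [DecidableEq κ] (t : F) (u : κ → F) (I : Finset κ)
    (k : κ) (z : F) : F :=
  if k ∈ I then (1 - t * z * u k) * (u k - t * z) / t else (u k - z) * (1 - t ^ 2 * u k * z) / t

/-- cleared right side -/
def RP {F : Type*} [Field F] {ι κ : Type*} [LinearOrder κ] (t : F) (x : ι → F) (u : κ → F)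
    (S : Finset ι) (U : Finset κ) (z : F) : F :=
  ∑ I ∈ U.powerset, RT t x u S U I *
    (DD x S (t * z) * ∏ k ∈ U, AA t u I k z + t ^ S.card * DD x S z * ∏ k ∈ U, BB t u I k z)

theorem pd_DD {F : Type*} [Field F] {ι : Type*} (s : F) (x : ι → F) (S : Finset ι) :
    IsPD (2 * S.card) (fun z => DD x S (s * z)) :=
  IsPD.prod S fun i _ => IsPD.quad 1 (- s * x i - s / x i) (s * x i * (s / x i))
    fun z => by ring

theorem pd_LP {F : Type*} [Field F] {ι κ : Type*} [LinearOrder ι] (t : F) (x : ι → F) (u : κ → F)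
    (S : Finset ι) (U : Finset κ) : IsPD (2 * S.card) (LP t x u S U) :=
  IsPD.sum _ fun J _ => IsPD.cmul _ <| IsPD.prod S fun i _ =>
    IsPD.quad 1 (- t / yv x J i - yv x J i) (t / yv x J i * yv x J i) fun z => by ring

theorem pd_QQ {F : Type*} [Field F] {κ : Type*} (t : F) (u : κ → F) (U : Finset κ) :
    IsPD (2 * U.card) (QQ t u U) :=
  IsPD.prod U fun k _ => IsPD.quad (u k) (-1 - t * u k * u k) (t * u k) fun z => by ring

theorem pd_RP {F : Type*} [Field F] {ι κ : Type*} [LinearOrder κ] (t : F) (x : ι → F) (u : κ → F)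
    (S : Finset ι) (U : Finset κ) : IsPD (2 * S.card + 2 * U.card) (RP t x u S U) := by
  refine IsPD.sum _ fun I _ => IsPD.cmul _ <| IsPD.add ?_ ?_
  · refine IsPD.mul (pd_DD t x S) (IsPD.prod U fun k _ => ?_)
    unfold AA
    split_ifs
    · exact IsPD.quad (u k) (-1 - u k * u k) (u k) fun z => by ring
    · exact IsPD.quad (t * u k / t) ((-1 - t * u k * t * u k) / t) (t * u k / t) fun z => by ring
  · refine IsPD.mul ?_ (IsPD.prod U fun k _ => ?_)
    · simpa using (pd_DD 1 x S).cmul (t ^ S.card)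
    unfold BB
    split_ifs
    · exact IsPD.quad (u k / t) ((-t - t * u k * u k) / t) (t * u k * t / t) fun z => by ring
    · exact IsPD.quad (u k / t) ((-1 - t ^ 2 * u k * u k) / t) (t ^ 2 * u k / t) fun z => by ring

structure Gen {F : Type*} [Field F] {ι κ : Type*} (t : F) (x : ι → F) (u : κ → F) : Prop where
  ht0 : t ≠ 0
  hx0 : ∀ i, x i ≠ 0
  hu0 : ∀ k, u k ≠ 0
  hx2 : ∀ i, (x i) ^ 2 ≠ 1
  hxx : ∀ i j, i ≠ j → x i * x j ≠ 1 ∧ x i ≠ x j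
  hux : ∀ k i, u k * x i ≠ 1 ∧ u k ≠ x i
  huu : ∀ k l, k ≠ l → t * u k * u l ≠ 1 ∧ u k ≠ u l
  h1 : ∀ i j, t ≠ x i * x j ∧ t * x i ≠ x j
  h2 : ∀ k, t * u k * u k ≠ 1
  h3 : ∀ k i, t * u k ≠ x i ∧ t * u k * x i ≠ 1

theorem sum_powerset_ins {F : Type*} [Field F] {ι : Type*} [DecidableEq ι] {S : Finset ι} {a : ι}
    (ha : a ∉ S) (f : Finset ι → F) :
    ∑ J ∈ (insert a S).powerset, f J = ∑ J ∈ S.powerset, (f J + f (insert a J)) := by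
  rw [Finset.sum_powerset_insert ha, Finset.sum_add_distrib]

def GTerm {F : Type*} [Field F] {ι κ : Type*} [LinearOrder ι] (t : F) (x : ι → F) (u : κ → F)
    (S : Finset ι) (U : Finset κ) (z w : F) (J : Finset ι) : F :=
  Tm t u S U (yv x J) * ((1 - t * w ^ 2) / (1 - w ^ 2) *
      (∏ i ∈ S, (1 - t * w * yv x J i) / (1 - w * yv x J i)) *
      ∏ k ∈ U, (1 - t * u k / w) / (1 - u k / w)) *
    ((1 - t * z / w) * (1 - z * w) * ∏ i ∈ S, ((1 - t * z / yv x J i) * (1 - z * yv x J i)))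

theorem LP_insert {F : Type*} [Field F] {ι κ : Type*} [LinearOrder ι] (t : F) (x : ι → F)
    (u : κ → F) (S : Finset ι) (U : Finset κ) (z : F) {a : ι} (ha : a ∉ S) :
    LP t x u (insert a S) U z =
      ∑ J ∈ S.powerset, (GTerm t x u S U z (x a)⁻¹ J + GTerm t x u S U z (x a) J) := by
  unfold LP
  rw [sum_powerset_ins ha]
  refine Finset.sum_congr rfl fun J hJ => ?_
  have haJ : a ∉ J := fun h => ha (Finset.mem_powerset.1 hJ h)
  have e : ∀ i ∈ S, yv x (insert a J) i = yv x J i := fun i hi => by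
    have : i ≠ a := fun h => ha (h ▸ hi)
    simp [yv, this]
  have e1 : yv x J a = (x a)⁻¹ := by simp [yv, haJ]
  have e2 : yv x (insert a J) a = x a := by simp [yv]
  rw [Tm_insert _ _ _ _ _ ha, Tm_insert _ _ _ _ _ ha, Tm_congr t u S U e]
  simp only [Finset.prod_insert ha, e1, e2]
  unfold GTerm
  congr 1
  congr 1
  · congr 3
    exact Finset.prod_congr rfl fun i hi => by rw [e i hi]
  · congr 1
    exact Finset.prod_congr rfl fun i hi => by rw [e i hi]

theorem DD_yv {F : Type*} [Field F] {ι : Type*} [DecidableEq ι] (x : ι → F) (S J : Finset ι)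
    (z : F) : DD x S z = ∏ i ∈ S, ((1 - z * yv x J i) * (1 - z / yv x J i)) := by
  refine Finset.prod_congr rfl fun i _ => ?_
  unfold yv
  split_ifs
  · rfl
  · rw [div_inv_eq_mul, div_eq_mul_inv, mul_comm]

end helpers

section helpers2

theorem DD_ne {F : Type*} [Field F] {ι : Type*} (x : ι → F) (S : Finset ι) (z : F)
    (hx0 : ∀ i ∈ S, x i ≠ 0) (h : ∀ i ∈ S, z * x i ≠ 1 ∧ z ≠ x i) : DD x S z ≠ 0 := by
  refine Finset.prod_ne_zero_iff.2 fun i hi => mul_ne_zero ?_ ?_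
  · exact sub_ne_zero.2 (h i hi).1.symm
  · rw [sub_ne_zero, ne_comm, Ne, div_eq_one_iff_eq (hx0 i hi)]
    exact (h i hi).2

theorem GTerm_self {F : Type*} [Field F] {ι κ : Type*} [LinearOrder ι] (t : F) (x : ι → F)
    (u : κ → F) (S : Finset ι) (U : Finset κ) (w : F) (J : Finset ι) (hw : w ≠ 0)
    (hw2 : w ^ 2 ≠ 1) (hy : ∀ i ∈ S, w * yv x J i ≠ 1) :
    GTerm t x u S U w w J = (1 - t * w ^ 2) * (1 - t) * DD x S (t * w) *
      (∏ k ∈ U, (1 - t * u k / w) / (1 - u k / w)) * Tm t u S U (yv x J) := by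
  unfold GTerm
  rw [DD_yv x S J]
  have h1 : (∏ i ∈ S, (1 - t * w * yv x J i) / (1 - w * yv x J i)) *
      ∏ i ∈ S, ((1 - t * w / yv x J i) * (1 - w * yv x J i)) =
      ∏ i ∈ S, ((1 - t * w * yv x J i) * (1 - t * w / yv x J i)) := by
    rw [← Finset.prod_mul_distrib]
    refine Finset.prod_congr rfl fun i hi => ?_
    have : 1 - w * yv x J i ≠ 0 := sub_ne_zero.2 (hy i hi).symm
    rw [div_mul_eq_mul_div, div_eq_iff this]
    ring
  rw [← h1]
  have h2 : (1 - t * w ^ 2) / (1 - w ^ 2) * ((1 - t * w / w) * (1 - w * w)) =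
      (1 - t * w ^ 2) * (1 - t) := by
    have : 1 - w ^ 2 ≠ 0 := sub_ne_zero.2 hw2.symm
    rw [mul_div_cancel_right₀ _ hw]
    field_simp
  rw [← h2]
  ring

theorem GTerm_inv {F : Type*} [Field F] {ι κ : Type*} [LinearOrder ι] (t : F) (x : ι → F)
    (u : κ → F) (S : Finset ι) (U : Finset κ) (z w : F) (J : Finset ι) (hw : z * w = 1) :
    GTerm t x u S U z w J = 0 := by
  simp [GTerm, hw]

theorem DD_insert {F : Type*} [Field F] {ι : Type*} [DecidableEq ι] (x : ι → F) (S : Finset ι)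
    {a : ι} (ha : a ∉ S) (z : F) :
    DD x (insert a S) z = (1 - z * x a) * (1 - z / x a) * DD x S z := by
  unfold DD
  rw [Finset.prod_insert ha]

/-- value of the cleared left side at `z = x_a^{±1}` -/
theorem LP_at {F : Type*} [Field F] {ι κ : Type*} [LinearOrder ι] {t : F} {x : ι → F}
    {u : κ → F} (H : Gen t x u) (S : Finset ι) (U : Finset κ) {a : ι} (ha : a ∉ S) (w : F)
    (hw : w = x a ∨ w = (x a)⁻¹) :
    LP t x u (insert a S) U w = DD x (insert a S) (t * w) *
      (∏ k ∈ U, (1 - t * u k / w) / (1 - u k / w)) * LH t x u S U := by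
  have hxa := H.hx0 a
  have hDD : DD x (insert a S) (t * w) = (1 - t * w ^ 2) * (1 - t) * DD x S (t * w) := by
    rw [DD_insert x S ha]
    rcases hw with rfl | rfl
    · field_simp
    · field_simp
  have hw0 : w ≠ 0 := by rcases hw with rfl | rfl <;> simp [hxa]
  have hw2 : w ^ 2 ≠ 1 := by
    rcases hw with rfl | rfl
    · exact H.hx2 a
    · simpa using H.hx2 a
  have hy : ∀ J : Finset ι, ∀ i ∈ S, w * yv x J i ≠ 1 := by
    intro J i hi
    have hia : a ≠ i := fun h => ha (h ▸ hi)
    have h1 := (H.hxx a i hia)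
    have hxi := H.hx0 i
    unfold yv
    rcases hw with rfl | rfl <;> split_ifs
    · exact h1.1
    · rw [← div_eq_mul_inv, Ne, div_eq_one_iff_eq hxi]; exact h1.2
    · rw [mul_comm, ← div_eq_mul_inv, Ne, div_eq_one_iff_eq hxa]; exact h1.2.symm
    · rw [← mul_inv, Ne, inv_eq_one]; exact h1.1
  rw [LP_insert t x u S U w ha, hDD, LH, Finset.mul_sum]
  refine Finset.sum_congr rfl fun J _ => ?_
  rw [← GTerm_self t x u S U w J hw0 hw2 (hy J)]
  rcases hw with rfl | rfl
  · rw [GTerm_inv _ _ _ _ _ _ _ _ (mul_inv_cancel₀ hxa), zero_add]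
  · rw [GTerm_inv _ _ _ _ _ _ _ _ (inv_mul_cancel₀ hxa), add_zero]

theorem DD_at {F : Type*} [Field F] {ι : Type*} [DecidableEq ι] {x : ι → F}
    (S : Finset ι) {a : ι} (hxa : x a ≠ 0) (ha : a ∈ S) (w : F)
    (hw : w = x a ∨ w = (x a)⁻¹) : DD x S w = 0 := by
  refine Finset.prod_eq_zero ha ?_
  rcases hw with rfl | rfl <;> simp [hxa]

theorem LP_zero {F : Type*} [Field F] {ι κ : Type*} [LinearOrder ι] (t : F) (x : ι → F)
    (u : κ → F) (S : Finset ι) (U : Finset κ) : LP t x u S U 0 = LH t x u S U := by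
  simp [LP, LH]

theorem DD_zero {F : Type*} [Field F] {ι : Type*} (x : ι → F) (S : Finset ι) : DD x S 0 = 1 := by
  simp [DD]

theorem RP_zero {F : Type*} [Field F] {ι κ : Type*} [LinearOrder κ] (t : F) (ht : t ≠ 0)
    (x : ι → F) (u : κ → F) (S : Finset ι) (U : Finset κ) :
    t ^ U.card * RP t x u S U 0 = (t ^ U.card + t ^ S.card) * QQ t u U 0 * RH t x u S U := by
  unfold RP RH
  rw [Finset.mul_sum, Finset.mul_sum]
  refine Finset.sum_congr rfl fun I _ => ?_
  have hA : ∏ k ∈ U, AA t u I k 0 = ∏ k ∈ U, u k := by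
    refine Finset.prod_congr rfl fun k _ => ?_
    unfold AA; split_ifs <;> field_simp <;> ring
  have hB : t ^ U.card * ∏ k ∈ U, BB t u I k 0 = ∏ k ∈ U, u k := by
    rw [← Finset.prod_const, ← Finset.prod_mul_distrib]
    refine Finset.prod_congr rfl fun k _ => ?_
    unfold BB; split_ifs <;> field_simp <;> ring
  have hQ : QQ t u U 0 = ∏ k ∈ U, u k := by simp [QQ]
  rw [mul_zero, DD_zero, hA, hQ]
  linear_combination (RT t x u S U I * t ^ S.card) * hB

/-- residue matching on the right -/
theorem RP_at {F : Type*} [Field F] {ι κ : Type*} [LinearOrder ι] [LinearOrder κ] {t : F}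
    {x : ι → F} {u : κ → F} (H : Gen t x u) (S : Finset ι) (U : Finset κ) {a : ι} (ha : a ∉ S)
    (w : F) (hw : w = x a ∨ w = (x a)⁻¹) :
    RP t x u (insert a S) U w = DD x (insert a S) (t * w) *
      (∏ k ∈ U, (1 - t * u k / w) / (1 - u k / w)) * QQ t u U w * RH t x u S U := by
  have hxa := H.hx0 a
  have ht := H.ht0
  unfold RP RH
  rw [Finset.mul_sum]
  refine Finset.sum_congr rfl fun I _ => ?_
  rw [DD_at (insert a S) hxa (Finset.mem_insert_self a S) w hw]
  unfold RT QQ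
  have key : (∏ k ∈ U, hh t x u (insert a S) I k) * ∏ k ∈ U, AA t u I k w =
      (∏ k ∈ U, (1 - t * u k / w) / (1 - u k / w)) *
        (∏ k ∈ U, (u k - w) * (1 - t * w * u k)) * ∏ k ∈ U, hh t x u S I k := by
    simp only [← Finset.prod_mul_distrib]
    refine Finset.prod_congr rfl fun k _ => ?_
    have hw0 : w ≠ 0 := by rcases hw with rfl | rfl <;> simp [hxa]
    have hk1 : 1 - u k * x a ≠ 0 := sub_ne_zero.2 (H.hux k a).1.symm
    have hk2 : x a - u k ≠ 0 := sub_ne_zero.2 (H.hux k a).2.symm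
    have hD : DD x S (u k) ≠ 0 := DD_ne x S _ (fun i _ => H.hx0 i) fun i _ => H.hux k i
    unfold hh AA
    split_ifs
    · unfold RR
      rw [DD_insert x S ha, DD_insert x S ha]
      rcases hw with rfl | rfl
      · field_simp
      · have hk3 : 1 - x a * u k ≠ 0 := by rwa [mul_comm]
        field_simp
    · rw [Finset.card_insert_of_notMem ha, pow_succ]
      have hk4 : w - u k ≠ 0 := by
        rcases hw with rfl | rfl
        · exact hk2
        · intro h; apply hk1; rw [← sub_eq_zero.1 h]; field_simp; simp
      field_simp
      ring
  linear_combination (PP U (fun i j => gg t (vv t u I i) (vv t u I j)) *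
    DD x (insert a S) (t * w)) * key

theorem DD_recip {F : Type*} [Field F] {ι : Type*} (x : ι → F) (S : Finset ι)
    (hx0 : ∀ i ∈ S, x i ≠ 0) (z : F) (hz : z ≠ 0) :
    z ^ (2 * S.card) * DD x S z⁻¹ = DD x S z := by
  unfold DD
  rw [pow_mul, ← Finset.prod_const, ← Finset.prod_mul_distrib]
  refine Finset.prod_congr rfl fun i hi => ?_
  have := hx0 i hi
  field_simp
  ring

theorem LP_recip {F : Type*} [Field F] {ι κ : Type*} [LinearOrder ι] (t : F) (ht : t ≠ 0)
    (x : ι → F) (u : κ → F) (S : Finset ι) (U : Finset κ) (hx0 : ∀ i ∈ S, x i ≠ 0) (z : F)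
    (hz : z ≠ 0) :
    t ^ S.card * z ^ (2 * S.card) * LP t x u S U (t * z)⁻¹ = LP t x u S U z := by
  unfold LP
  rw [Finset.mul_sum]
  refine Finset.sum_congr rfl fun J _ => ?_
  rw [mul_left_comm]
  congr 1
  rw [pow_mul, ← mul_pow, ← Finset.prod_const, ← Finset.prod_mul_distrib]
  refine Finset.prod_congr rfl fun i hi => ?_
  have : yv x J i ≠ 0 := by
    unfold yv; split_ifs
    · exact hx0 i hi
    · exact inv_ne_zero (hx0 i hi)
  field_simp
  ring

end helpers2

section helpers3

theorem AA_eq {F : Type*} [Field F] {κ : Type*} [DecidableEq κ] (t : F) (ht : t ≠ 0) (u : κ → F)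
    (I : Finset κ) (k : κ) (z : F) (hz : z ≠ 0) (hk : u k ≠ 0) (h1 : z ≠ u k)
    (h2 : t * z * u k ≠ 1) :
    AA t u I k z = (u k - z) * (1 - t * z * u k) * gg t z (vv t u I k) := by
  have h1' : u k - z ≠ 0 := sub_ne_zero.2 h1.symm
  have h2' : 1 - t * z * u k ≠ 0 := sub_ne_zero.2 h2.symm
  unfold AA gg vv
  split_ifs
  · rw [mul_div_assoc', eq_div_iff h2']; ring
  · have e1 : 1 - z * (t * u k)⁻¹ = (t * u k - z) / (t * u k) := by field_simp
    have e2 : 1 - t * z * (t * u k)⁻¹ = (u k - z) / u k := by field_simp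
    rw [e1, e2]
    field_simp

theorem BB_eq {F : Type*} [Field F] {κ : Type*} [DecidableEq κ] (t : F) (ht : t ≠ 0) (u : κ → F)
    (I : Finset κ) (k : κ) (z : F) (hz : z ≠ 0) (hk : u k ≠ 0) (h1 : z ≠ u k)
    (h2 : t * z * u k ≠ 1) :
    BB t u I k z = (u k - z) * (1 - t * z * u k) * gg t (t * z)⁻¹ (vv t u I k) := by
  have h1' : u k - z ≠ 0 := sub_ne_zero.2 h1.symm
  have h1'' : z - u k ≠ 0 := sub_ne_zero.2 h1
  have h2' : t * z * u k - 1 ≠ 0 := sub_ne_zero.2 h2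
  unfold BB gg vv
  split_ifs
  · have e1 : 1 - (t * z)⁻¹ * u k = (t * z - u k) / (t * z) := by field_simp
    have e2 : 1 - t * (t * z)⁻¹ * u k = (z - u k) / z := by field_simp
    rw [e1, e2]
    field_simp
    ring
  · have e1 : 1 - (t * z)⁻¹ * (t * u k)⁻¹ = (t ^ 2 * z * u k - 1) / (t ^ 2 * z * u k) := by
      field_simp
    have e2 : 1 - t * (t * z)⁻¹ * (t * u k)⁻¹ = (t * z * u k - 1) / (t * z * u k) := by
      field_simp
    have h3 : t ^ 2 * z * u k * (t * z * u k - 1) ≠ 0 := by simp [*]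
    rw [e1, e2, div_div_div_eq, mul_div_assoc', eq_div_iff h3, div_mul_eq_mul_div, div_eq_iff ht]
    ring

theorem mem_ins_iff {κ : Type*} [DecidableEq κ] {U I : Finset κ} {j : κ} (hj : j ∉ U) :
    ∀ k ∈ U, k ∈ insert j I ↔ k ∈ I := by
  intro k hk
  have : k ≠ j := fun h => hj (h ▸ hk)
  simp [this]

theorem RP_cancel1 {F : Type*} [Field F] {ι κ : Type*} [LinearOrder κ] {t : F}
    {x : ι → F} {u : κ → F} (H : Gen t x u) (S : Finset ι) (U : Finset κ) {j : κ} (hj : j ∉ U) :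
    RP t x u S (insert j U) (u j) = 0 := by
  have ht := H.ht0
  have hjj := H.hu0 j
  unfold RP
  rw [sum_powerset_ins hj]
  refine Finset.sum_eq_zero fun I hI => ?_
  have hjI : j ∉ I := fun h => hj (Finset.mem_powerset.1 hI h)
  have hD : DD x S (u j) ≠ 0 := DD_ne x S _ (fun i _ => H.hx0 i) fun i _ => H.hux j i
  have hm := mem_ins_iff (I := I) hj
  rw [RT_insert _ _ _ _ _ _ hj, RT_insert _ _ _ _ _ _ hj, RT_congr t x u S U hm]
  simp only [Finset.prod_insert hj]
  have a1 : AA t u (insert j I) j (u j) = 0 := by simp [AA]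
  have b1 : BB t u I j (u j) = 0 := by simp [BB, hjI]
  have b2 : BB t u (insert j I) j (u j) = - AA t u I j (u j) := by
    simp only [AA, BB, hjI, Finset.mem_insert_self, if_true, if_false]; ring
  have e1 : ∏ k ∈ U, gg t (vv t u (insert j I) j) (vv t u (insert j I) k) =
      ∏ k ∈ U, gg t (u j) (vv t u I k) :=
    Finset.prod_congr rfl fun k hk => by simp [vv, hm k hk]
  have e2 : ∏ k ∈ U, BB t u (insert j I) k (u j) = ∏ k ∈ U, BB t u I k (u j) :=
    Finset.prod_congr rfl fun k hk => by simp [BB, hm k hk]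
  have e3 : vv t u I j = (t * u j)⁻¹ := by simp [vv, hjI]
  have e4 : hh t x u S I j = t ^ S.card := by simp [hh, hjI]
  have e5 : hh t x u S (insert j I) j = DD x S (t * u j) / DD x S (u j) := by simp [hh, RR]
  have key : (∏ k ∈ U, gg t (t * u j)⁻¹ (vv t u I k)) * ∏ k ∈ U, AA t u I k (u j) =
      (∏ k ∈ U, gg t (u j) (vv t u I k)) * ∏ k ∈ U, BB t u I k (u j) := by
    simp only [← Finset.prod_mul_distrib]
    refine Finset.prod_congr rfl fun k hk => ?_
    have hjk : j ≠ k := fun h => hj (h ▸ hk)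
    rw [AA_eq t ht u I k _ hjj (H.hu0 k) (H.huu j k hjk).2 (H.huu j k hjk).1,
      BB_eq t ht u I k _ hjj (H.hu0 k) (H.huu j k hjk).2 (H.huu j k hjk).1]
    ring
  rw [a1, b1, b2, e1, e2, e3, e4, e5]
  have hd : DD x S (t * u j) / DD x S (u j) * DD x S (u j) = DD x S (t * u j) :=
    div_mul_cancel₀ _ hD
  linear_combination (RT t x u S U I * t ^ S.card * DD x S (t * u j) * AA t u I j (u j)) * key
    - (RT t x u S U I * (∏ k ∈ U, gg t (u j) (vv t u I k)) * t ^ S.card *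
      AA t u I j (u j) * ∏ k ∈ U, BB t u I k (u j)) * hd

theorem RP_cancel2 {F : Type*} [Field F] {ι κ : Type*} [LinearOrder κ] {t : F}
    {x : ι → F} {u : κ → F} (H : Gen t x u) (S : Finset ι) (U : Finset κ) {j : κ} (hj : j ∉ U) :
    RP t x u S (insert j U) (t * u j)⁻¹ = 0 := by
  have ht := H.ht0
  have hjj := H.hu0 j
  unfold RP
  rw [sum_powerset_ins hj]
  refine Finset.sum_eq_zero fun I hI => ?_
  have hjI : j ∉ I := fun h => hj (Finset.mem_powerset.1 hI h)
  have hD : DD x S (u j) ≠ 0 := DD_ne x S _ (fun i _ => H.hx0 i) fun i _ => H.hux j i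
  have hm := mem_ins_iff (I := I) hj
  rw [RT_insert _ _ _ _ _ _ hj, RT_insert _ _ _ _ _ _ hj, RT_congr t x u S U hm]
  simp only [Finset.prod_insert hj]
  have hz : t * (t * u j)⁻¹ = (u j)⁻¹ := by field_simp
  have a1 : AA t u I j (t * u j)⁻¹ = 0 := by
    simp only [AA, hjI, if_false, hz, inv_mul_cancel₀ hjj]; simp
  have b1 : BB t u (insert j I) j (t * u j)⁻¹ = 0 := by
    simp only [BB, Finset.mem_insert_self, if_true, hz, inv_mul_cancel₀ hjj]; simp
  have b2 : BB t u I j (t * u j)⁻¹ = - AA t u (insert j I) j (t * u j)⁻¹ := by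
    simp only [AA, BB, hjI, Finset.mem_insert_self, if_true, if_false]; field_simp; ring
  have e1 : ∏ k ∈ U, gg t (vv t u (insert j I) j) (vv t u (insert j I) k) =
      ∏ k ∈ U, gg t (u j) (vv t u I k) :=
    Finset.prod_congr rfl fun k hk => by simp [vv, hm k hk]
  have e2 : ∏ k ∈ U, AA t u (insert j I) k (t * u j)⁻¹ = ∏ k ∈ U, AA t u I k (t * u j)⁻¹ :=
    Finset.prod_congr rfl fun k hk => by simp [AA, hm k hk]
  have e3 : vv t u I j = (t * u j)⁻¹ := by simp [vv, hjI]
  have e4 : hh t x u S I j = t ^ S.card := by simp [hh, hjI]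
  have e5 : hh t x u S (insert j I) j = DD x S (t * u j) / DD x S (u j) := by simp [hh, RR]
  have key : (∏ k ∈ U, gg t (t * u j)⁻¹ (vv t u I k)) * ∏ k ∈ U, BB t u I k (t * u j)⁻¹ =
      (∏ k ∈ U, gg t (u j) (vv t u I k)) * ∏ k ∈ U, AA t u I k (t * u j)⁻¹ := by
    simp only [← Finset.prod_mul_distrib]
    refine Finset.prod_congr rfl fun k hk => ?_
    have hjk : j ≠ k := fun h => hj (h ▸ hk)
    have c0 : (t * u j)⁻¹ ≠ 0 := inv_ne_zero (mul_ne_zero ht hjj)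
    have c1 : (t * u j)⁻¹ ≠ u k := fun h => (H.huu j k hjk).1 (by rw [← h]; field_simp)
    have c2 : t * (t * u j)⁻¹ * u k ≠ 1 := by
      rw [hz, inv_mul_eq_div, Ne, div_eq_one_iff_eq hjj]
      exact (H.huu j k hjk).2.symm
    rw [AA_eq t ht u I k _ c0 (H.hu0 k) c1 c2, BB_eq t ht u I k _ c0 (H.hu0 k) c1 c2, hz, inv_inv]
    ring
  have hD1 := DD_recip x S (fun i _ => H.hx0 i) (u j) hjj
  have hD2 := DD_recip x S (fun i _ => H.hx0 i) (t * u j) (mul_ne_zero ht hjj)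
  rw [a1, b1, b2, e1, e2, e3, e4, e5, hz]
  have hd : DD x S (t * u j) / DD x S (u j) * DD x S (u j)⁻¹ =
      t ^ S.card * t ^ S.card * DD x S (t * u j)⁻¹ := by
    rw [← hD2, ← hD1]
    have : DD x S (u j)⁻¹ ≠ 0 := by
      intro h; rw [h, mul_zero] at hD1; exact hD hD1.symm
    have hu' : u j ^ (2 * S.card) * DD x S (u j)⁻¹ ≠ 0 := by rwa [hD1]
    rw [div_mul_eq_mul_div, div_eq_iff hu']
    ring
  set A := AA t u (insert j I) j (t * u j)⁻¹
  linear_combination (- RT t x u S U I * t ^ S.card * t ^ S.card * DD x S (t * u j)⁻¹ * A) * key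
    + (RT t x u S U I * (∏ k ∈ U, gg t (u j) (vv t u I k)) *
      A * ∏ k ∈ U, AA t u I k (t * u j)⁻¹) * hd

/-- the interpolation points -/
def pts {F : Type*} [Field F] {ι κ : Type*} (t : F) (x : ι → F) (u : κ → F)
    (S : Finset ι) (U : Finset κ) : Option ((S ⊕ S) ⊕ (U ⊕ U)) → F
  | none => 0
  | some (Sum.inl (Sum.inl i)) => x i
  | some (Sum.inl (Sum.inr i)) => (x i)⁻¹
  | some (Sum.inr (Sum.inl k)) => u k
  | some (Sum.inr (Sum.inr k)) => (t * u k)⁻¹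

theorem pts_inj {F : Type*} [Field F] {ι κ : Type*} {t : F} {x : ι → F} {u : κ → F}
    (H : Gen t x u) (S : Finset ι) (U : Finset κ) : Function.Injective (pts t x u S U) := by
  have ht := H.ht0
  have hx := H.hx0
  have hu := H.hu0
  have xx : ∀ i j, x i = x j → i = j := fun i j h => by
    by_contra hij; exact (H.hxx i j hij).2 h
  have xy : ∀ i j, x i ≠ (x j)⁻¹ := fun i j h => by
    have h' : x i * x j = 1 := by rw [h, inv_mul_cancel₀ (hx j)]
    by_cases hij : i = j
    · subst hij; exact H.hx2 i (by rw [sq, h'])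
    · exact (H.hxx i j hij).1 h'
  have ux : ∀ k i, u k ≠ x i := fun k i => (H.hux k i).2
  have uy : ∀ k i, u k ≠ (x i)⁻¹ := fun k i h =>
    (H.hux k i).1 (by rw [h, inv_mul_cancel₀ (hx i)])
  have uu : ∀ k l, u k = u l → k = l := fun k l h => by
    by_contra hkl; exact (H.huu k l hkl).2 h
  have uw : ∀ k l, u k ≠ (t * u l)⁻¹ := fun k l h => by
    have hh : t * u l * u k = 1 := by rw [h, mul_inv_cancel₀ (mul_ne_zero ht (hu l))]
    by_cases hkl : l = k
    · subst hkl; exact H.h2 l hh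
    · exact (H.huu l k hkl).1 hh
  have wx : ∀ k i, (t * u k)⁻¹ ≠ x i := fun k i h =>
    (H.h3 k i).2 (by rw [← h, mul_inv_cancel₀ (mul_ne_zero ht (hu k))])
  have wy : ∀ k i, (t * u k)⁻¹ ≠ (x i)⁻¹ := fun k i h => (H.h3 k i).1 (inv_injective h)
  have ww : ∀ k l, (t * u k)⁻¹ = (t * u l)⁻¹ → k = l := fun k l h =>
    uu k l (mul_left_cancel₀ ht (inv_injective h))
  have z1 : ∀ i, (x i)⁻¹ ≠ 0 := fun i => inv_ne_zero (hx i)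
  have z2 : ∀ i, (t * u i)⁻¹ ≠ 0 := fun i => inv_ne_zero (mul_ne_zero ht (hu i))
  rintro (_ | (i | i) | (i | i)) (_ | (j | j) | (j | j)) h <;> simp only [pts] at h
  · rfl
  · exact absurd h.symm (hx _)
  · exact absurd h.symm (z1 _)
  · exact absurd h.symm (hu _)
  · exact absurd h.symm (z2 _)
  · exact absurd h (hx _)
  · rw [Subtype.ext (xx _ _ h)]
  · exact absurd h (xy _ _)
  · exact absurd h.symm (ux _ _)
  · exact absurd h.symm (wx _ _)
  · exact absurd h (z1 _)
  · exact absurd h.symm (xy _ _)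
  · rw [Subtype.ext (xx _ _ (inv_injective h))]
  · exact absurd h.symm (uy _ _)
  · exact absurd h.symm (wy _ _)
  · exact absurd h (hu _)
  · exact absurd h (ux _ _)
  · exact absurd h (uy _ _)
  · rw [Subtype.ext (uu _ _ h)]
  · exact absurd h (uw _ _)
  · exact absurd h (z2 _)
  · exact absurd h (wx _ _)
  · exact absurd h (wy _ _)
  · exact absurd h.symm (uw _ _)
  · rw [Subtype.ext (ww _ _ h)]

theorem vanish {F : Type*} [Field F] {ι κ : Type*} {t : F} {x : ι → F} {u : κ → F}
    (H : Gen t x u) (S : Finset ι) (U : Finset κ) (f : F → F)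
    (hf : IsPD (2 * S.card + 2 * U.card) f) (h0 : f 0 = 0) (hx : ∀ i ∈ S, f (x i) = 0)
    (hx' : ∀ i ∈ S, f (x i)⁻¹ = 0) (hu : ∀ k ∈ U, f (u k) = 0)
    (hu' : ∀ k ∈ U, f (t * u k)⁻¹ = 0) (z : F) : f z = 0 := by
  refine hf.eq_zero (pts t x u S U) (pts_inj H S U) ?_ ?_ z
  · rintro (_ | (i | i) | (i | i))
    · exact h0
    · exact hx _ i.2
    · exact hx' _ i.2
    · exact hu _ i.2
    · exact hu' _ i.2
  · simp only [Fintype.card_option, Fintype.card_sum, Fintype.card_coe]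
    omega

/-- structure constants -/
structure IsC {F : Type*} [Field F] (t : F) (c : ℕ → ℕ → F) : Prop where
  c0 : c 0 0 = 1
  c1 : ∀ n, c (n + 1) 0 = (t ^ (n + 1) + 1) * c n 0
  c2 : ∀ n r, c (n + 1) (r + 1) = c n r
  c3 : ∀ n r, (t ^ r + t ^ n) * c n (r + 1) = t ^ r * c n r

theorem RH_empty {F : Type*} [Field F] {ι κ : Type*} [LinearOrder κ] (t : F) (x : ι → F)
    (u : κ → F) (S : Finset ι) : RH t x u S ∅ = 1 := by
  simp [RH, RT, PP]

theorem base {F : Type*} [Field F] {ι κ : Type*} [LinearOrder ι] [LinearOrder κ] {t : F}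
    {x : ι → F} {u : κ → F} (H : Gen t x u) (c : ℕ → ℕ → F) (hc : IsC t c) (S : Finset ι) :
    LH t x u S ∅ = c S.card 0 := by
  have ht := H.ht0
  suffices ∀ n, ∀ S : Finset ι, S.card = n → LH t x u S ∅ = c n 0 from this _ S rfl
  intro n
  induction n with
  | zero =>
    intro S hS
    rw [Finset.card_eq_zero] at hS
    subst hS
    simp [LH, Tm, PP, hc.c0]
  | succ n ih =>
    intro S hS
    set C := c n 0 with hC
    set K := LH t x u S ∅ - C * (t ^ (n + 1) + 1) with hK
    have hat : ∀ i ∈ S, ∀ w, (w = x i ∨ w = (x i)⁻¹) →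
        LP t x u S ∅ w = C * DD x S (t * w) := by
      intro i hi w hw
      have hn := Finset.notMem_erase i S
      have := LP_at H (S.erase i) ∅ hn w hw
      rw [Finset.insert_erase hi, ih (S.erase i) (by rw [Finset.card_erase_of_mem hi, hS]; rfl)]
        at this
      rw [this]; simp [mul_comm]
    have hz : ∀ z, LP t x u S ∅ z - ((C * t ^ (n + 1) + K) * DD x S z + C * DD x S (t * z)) = 0 := by
      intro z
      refine vanish H S ∅ (fun z => LP t x u S ∅ z -
        ((C * t ^ (n + 1) + K) * DD x S z + C * DD x S (t * z))) ?_ ?_ ?_ ?_ ?_ ?_ z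
      · have h1 : IsPD (2 * S.card) (fun z => (C * t ^ (n + 1) + K) * DD x S z) := by
          simpa using (pd_DD 1 x S).cmul (C * t ^ (n + 1) + K)
        simpa using (pd_LP t x u S ∅).sub (h1.add ((pd_DD t x S).cmul C))
      · simp only [LP_zero, mul_zero, DD_zero, hK]; ring
      · intro i hi
        simp only [hat i hi _ (Or.inl rfl), DD_at S (H.hx0 i) hi _ (Or.inl rfl)]; ring
      · intro i hi
        simp only [hat i hi _ (Or.inr rfl), DD_at S (H.hx0 i) hi _ (Or.inr rfl)]; ring
      · simp
      · simp
    obtain ⟨a, ha⟩ : S.Nonempty := Finset.card_pos.1 (by omega)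
    have hxa := H.hx0 a
    have hxa' : (x a)⁻¹ ≠ 0 := inv_ne_zero hxa
    have hL := LP_recip t ht x u S ∅ (fun i _ => H.hx0 i) (x a)⁻¹ hxa'
    have hD1 := DD_recip x S (fun i _ => H.hx0 i) (t * (x a)⁻¹) (mul_ne_zero ht hxa')
    have hne : DD x S (t * (x a)⁻¹) ≠ 0 := by
      refine DD_ne x S _ (fun i _ => H.hx0 i) fun i _ => ⟨fun h => ?_, fun h => ?_⟩
      · apply (H.h1 i a).2
        field_simp at h
        exact h
      · apply (H.h1 i a).1
        rw [← h]; field_simp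
    have e1 := hz (t * (x a)⁻¹)⁻¹
    have e2 : t * (t * (x a)⁻¹)⁻¹ = x a := by field_simp
    rw [e2, DD_at S hxa ha _ (Or.inl rfl)] at e1
    rw [hat a ha _ (Or.inr rfl)] at hL
    rw [hS] at hL hD1
    rw [mul_pow] at hD1
    have hp : t ^ (n + 1) ≠ 0 := pow_ne_zero _ ht
    have hK0 : K * DD x S (t * (x a)⁻¹) = 0 := by
      have e3 : t ^ (2 * (n + 1)) = t ^ (n + 1) * t ^ (n + 1) := by rw [two_mul, pow_add]
      rw [e3] at hD1
      linear_combination (-t ^ (n + 1) * t ^ (n + 1) * (x a)⁻¹ ^ (2 * (n + 1))) * e1 +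
        t ^ (n + 1) * hL - (C * t ^ (n + 1) + K) * hD1
    have hK1 : K = 0 := (mul_eq_zero.1 hK0).resolve_right hne
    rw [hc.c1, ← hC]
    linear_combination hK1

theorem step {F : Type*} [Field F] {ι κ : Type*} [LinearOrder ι] [LinearOrder κ] {t : F}
    {x : ι → F} {u : κ → F} (H : Gen t x u)     (c : ℕ → ℕ → F) (hc : IsC t c) (U : Finset κ)
    (ih : ∀ S : Finset ι, LH t x u S U = c S.card U.card * RH t x u S U) (S : Finset ι) (z : F) :
    LP t x u S U z * QQ t u U z = c S.card (U.card + 1) * RP t x u S U z := by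
  have ht := H.ht0
  rw [← sub_eq_zero]
  have hat : ∀ i ∈ S, ∀ w, (w = x i ∨ w = (x i)⁻¹) →
      LP t x u S U w * QQ t u U w - c S.card (U.card + 1) * RP t x u S U w = 0 := by
    intro i hi w hw
    have hn := Finset.notMem_erase i S
    have h1 := LP_at H (S.erase i) U hn w hw
    have h2 := RP_at H (S.erase i) U hn w hw
    have h3 : S.card = (S.erase i).card + 1 := by
      rw [Finset.card_erase_add_one hi]
    rw [Finset.insert_erase hi] at h1 h2
    rw [h1, h2, ih, h3, hc.c2]
    ring
  refine vanish H S U (fun z => LP t x u S U z * QQ t u U z -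
    c S.card (U.card + 1) * RP t x u S U z) ?_ ?_ ?_ ?_ ?_ ?_ z
  · exact ((pd_LP t x u S U).mul (pd_QQ t u U)).sub ((pd_RP t x u S U).cmul _)
  · have h1 := RP_zero t ht x u S U
    have h2 := hc.c3 S.card U.card
    have hp : t ^ U.card ≠ 0 := pow_ne_zero _ ht
    apply mul_left_cancel₀ hp
    rw [LP_zero, ih]
    linear_combination (-c S.card (U.card + 1)) * h1 - (QQ t u U 0 * RH t x u S U) * h2
  · exact fun i hi => hat i hi _ (Or.inl rfl)
  · exact fun i hi => hat i hi _ (Or.inr rfl)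
  · intro k hk
    have h1 := RP_cancel1 H S (U.erase k) (Finset.notMem_erase k U)
    rw [Finset.insert_erase hk] at h1
    have h2 : QQ t u U (u k) = 0 := Finset.prod_eq_zero hk (by simp)
    simp only [h1, h2]; ring
  · intro k hk
    have h1 := RP_cancel2 H S (U.erase k) (Finset.notMem_erase k U)
    rw [Finset.insert_erase hk] at h1
    have h2 : QQ t u U (t * u k)⁻¹ = 0 := Finset.prod_eq_zero hk (by
      have := H.hu0 k
      have : 1 - t * (t * u k)⁻¹ * u k = 0 := by field_simp; simp
      rw [this, mul_zero])
    simp only [h1, h2]; ring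

theorem gen_main {F : Type*} [Field F] {ι κ : Type*} [LinearOrder ι] [LinearOrder κ] {t : F}
    {x : ι → F} {u : κ → F} (H : Gen t x u)     (c : ℕ → ℕ → F) (hc : IsC t c) (U : Finset κ) :
    ∀ S : Finset ι, LH t x u S U = c S.card U.card * RH t x u S U := by
  induction U using Finset.induction_on with
  | empty => intro S; rw [base H c hc, RH_empty, mul_one, Finset.card_empty]
  | insert b U hb ih =>
    intro S
    have ht := H.ht0
    have hub := H.hu0 b
    have hst := step H c hc U ih S (u b)
    have hbk : ∀ k ∈ U, b ≠ k := fun k hk h => hb (h ▸ hk)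
    have hD : DD x S (u b) ≠ 0 := DD_ne x S _ (fun i _ => H.hx0 i) fun i _ => H.hux b i
    have hQ : QQ t u U (u b) ≠ 0 := Finset.prod_ne_zero_iff.2 fun k hk =>
      mul_ne_zero (sub_ne_zero.2 (H.huu b k (hbk k hk)).2.symm)
        (sub_ne_zero.2 (H.huu b k (hbk k hk)).1.symm)
    have hL : LP t x u S U (u b) = DD x S (u b) * LH t x u S (insert b U) := by
      unfold LP LH
      rw [Finset.mul_sum]
      refine Finset.sum_congr rfl fun J _ => ?_
      rw [Tm_insert_right t u S U _ hb, mul_left_comm, DD_yv x S J, ← Finset.prod_mul_distrib]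
      congr 1
      refine Finset.prod_congr rfl fun i hi => ?_
      have : 1 - u b / yv x J i ≠ 0 := by
        have h0 := H.hx0 i
        have h1 := H.hux b i
        rw [sub_ne_zero, ne_comm]
        unfold yv; split_ifs
        · rw [Ne, div_eq_one_iff_eq h0]; exact h1.2
        · rw [div_inv_eq_mul]; exact h1.1
      rw [mul_assoc, mul_div_cancel₀ _ this, mul_comm]
    have hR : RP t x u S U (u b) = QQ t u U (u b) * DD x S (u b) * RH t x u S (insert b U) := by
      unfold RP RH
      rw [Finset.mul_sum, sum_powerset_ins hb]
      refine Finset.sum_congr rfl fun I hI => ?_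
      have hbI : b ∉ I := fun h => hb (Finset.mem_powerset.1 hI h)
      have hm := mem_ins_iff (I := I) hb
      rw [RT_insert _ _ _ _ _ _ hb, RT_insert _ _ _ _ _ _ hb, RT_congr t x u S U hm]
      have e1 : ∏ k ∈ U, gg t (vv t u (insert b I) b) (vv t u (insert b I) k) =
          ∏ k ∈ U, gg t (u b) (vv t u I k) :=
        Finset.prod_congr rfl fun k hk => by simp [vv, hm k hk]
      have e3 : vv t u I b = (t * u b)⁻¹ := by simp [vv, hbI]
      have e4 : hh t x u S I b = t ^ S.card := by simp [hh, hbI]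
      have e5 : hh t x u S (insert b I) b = DD x S (t * u b) / DD x S (u b) := by simp [hh, RR]
      have eA : ∏ k ∈ U, AA t u I k (u b) =
          QQ t u U (u b) * ∏ k ∈ U, gg t (u b) (vv t u I k) := by
        unfold QQ
        rw [← Finset.prod_mul_distrib]
        exact Finset.prod_congr rfl fun k hk =>
          AA_eq t ht u I k _ hub (H.hu0 k) (H.huu b k (hbk k hk)).2 (H.huu b k (hbk k hk)).1
      have eB : ∏ k ∈ U, BB t u I k (u b) =
          QQ t u U (u b) * ∏ k ∈ U, gg t (t * u b)⁻¹ (vv t u I k) := by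
        unfold QQ
        rw [← Finset.prod_mul_distrib]
        exact Finset.prod_congr rfl fun k hk =>
          BB_eq t ht u I k _ hub (H.hu0 k) (H.huu b k (hbk k hk)).2 (H.huu b k (hbk k hk)).1
      rw [e1, e3, e4, e5, eA, eB]
      field_simp
      ring
    rw [Finset.card_insert_of_notMem hb]
    rw [hL, hR] at hst
    apply mul_left_cancel₀ (mul_ne_zero hD hQ)
    linear_combination hst

end helpers3

section helpers4
open Polynomial

def cc {F : Type*} [Field F] (t : F) (n r : ℕ) : F :=
  if r ≤ n then ∏ k ∈ Finset.range (n - r), (t ^ (k + 1) + 1)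
          else (∏ k ∈ Finset.range (r - n), ((t ^ k)⁻¹ + 1))⁻¹

theorem isC_cc {F : Type*} [Field F] (t : F) (ht0 : t ≠ 0) (ht2 : ∀ k : ℕ, t ^ k + 1 ≠ 0) :
    IsC t (cc t) := by
  refine ⟨by simp [cc], fun n => ?_, fun n r => ?_, fun n r => ?_⟩
  · simp only [cc, Nat.zero_le, if_true, Nat.sub_zero, Finset.prod_range_succ]; ring
  · simp only [cc, Nat.add_le_add_iff_right, Nat.add_sub_add_right]
  · unfold cc
    rcases lt_trichotomy r n with h | h | h
    · obtain ⟨m, rfl⟩ : ∃ m, n = r + 1 + m := ⟨n - r - 1, by omega⟩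
      rw [if_pos (by omega), if_pos (by omega), show r + 1 + m - (r + 1) = m by omega,
        show r + 1 + m - r = m + 1 by omega, Finset.prod_range_succ]
      ring
    · subst h
      have h2 := ht2 0
      have h2' : (1 : F) + 1 ≠ 0 := by simpa using h2
      simp only [Nat.not_succ_le_self, if_false, le_refl, if_true, Nat.sub_self,
        show r + 1 - r = 1 by omega, Finset.prod_range_one, Finset.prod_range_zero, pow_zero,
        inv_one]
      field_simp
    · obtain ⟨m, rfl⟩ : ∃ m, r = n + 1 + m := ⟨r - n - 1, by omega⟩
      rw [if_neg (by omega), if_neg (by omega), show n + 1 + m + 1 - n = m + 1 + 1 by omega,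
        show n + 1 + m - n = m + 1 by omega, Finset.prod_range_succ _ (m + 1), mul_inv]
      have h1 := ht2 (m + 1)
      have h2 : (t ^ (m + 1))⁻¹ + 1 ≠ 0 := by
        have : (t ^ (m + 1))⁻¹ + 1 = (t ^ (m + 1) + 1) / t ^ (m + 1) := by
          field_simp; ring
        rw [this]; exact div_ne_zero h1 (pow_ne_zero _ ht0)
      have h3 : t ^ (n + 1 + m) + t ^ n = t ^ (n + 1 + m) * ((t ^ (m + 1))⁻¹ + 1) := by
        field_simp; ring
      rw [h3]
      generalize (∏ x ∈ Finset.range (m + 1), ((t ^ x)⁻¹ + 1))⁻¹ = P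
      rw [mul_comm P, mul_assoc, mul_inv_cancel_left₀ h2]

/-- `a` is regular at `X = 0` with value `b` -/
def Sp {F : Type*} [Field F] (a : RatFunc F) (b : F) : Prop :=
  ∃ p q : F[X], q.eval 0 ≠ 0 ∧ a * algebraMap F[X] (RatFunc F) q = algebraMap F[X] (RatFunc F) p ∧
    b * q.eval 0 = p.eval 0

theorem Sp.poly {F : Type*} [Field F] (p : F[X]) : Sp (algebraMap F[X] (RatFunc F) p) (p.eval 0) :=
  ⟨p, 1, by simp, by simp, by simp⟩

theorem Sp.add {F : Type*} [Field F] {a a' : RatFunc F} {b b' : F} (h : Sp a b) (h' : Sp a' b') :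
    Sp (a + a') (b + b') := by
  obtain ⟨p, q, h0, h1, h2⟩ := h
  obtain ⟨p', q', h0', h1', h2'⟩ := h'
  refine ⟨p * q' + p' * q, q * q', by simp [h0, h0'], ?_, ?_⟩
  · simp only [map_add, map_mul, ← h1, ← h1']; ring
  · simp only [eval_add, eval_mul, ← h2, ← h2']; ring

theorem Sp.mul {F : Type*} [Field F] {a a' : RatFunc F} {b b' : F} (h : Sp a b) (h' : Sp a' b') :
    Sp (a * a') (b * b') := by
  obtain ⟨p, q, h0, h1, h2⟩ := h
  obtain ⟨p', q', h0', h1', h2'⟩ := h'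
  refine ⟨p * p', q * q', by simp [h0, h0'], ?_, ?_⟩
  · simp only [map_mul, ← h1, ← h1']; ring
  · simp only [eval_mul, ← h2, ← h2']; ring

theorem Sp.one {F : Type*} [Field F] : Sp (1 : RatFunc F) (1 : F) := by
  simpa using Sp.poly (1 : F[X])

theorem Sp.zero {F : Type*} [Field F] : Sp (0 : RatFunc F) (0 : F) := by
  simpa using Sp.poly (0 : F[X])

theorem Sp.sub {F : Type*} [Field F] {a a' : RatFunc F} {b b' : F} (h : Sp a b) (h' : Sp a' b') :
    Sp (a - a') (b - b') := by
  have h1 : Sp (-1 : RatFunc F) (-1 : F) := by simpa using Sp.poly (-1 : F[X])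
  simpa [sub_eq_add_neg] using h.add (h1.mul h')

theorem Sp.pow {F : Type*} [Field F] {a : RatFunc F} {b : F} (h : Sp a b) (n : ℕ) :
    Sp (a ^ n) (b ^ n) := by
  induction n with
  | zero => simpa using Sp.one
  | succ n ih => simpa [pow_succ] using ih.mul h

theorem Sp.unique {F : Type*} [Field F] {a : RatFunc F} {b b' : F} (h : Sp a b) (h' : Sp a b') :
    b = b' := by
  obtain ⟨p, q, h0, h1, h2⟩ := h
  obtain ⟨p', q', h0', h1', h2'⟩ := h'
  have e : algebraMap F[X] (RatFunc F) (p * q') = algebraMap F[X] (RatFunc F) (p' * q) := by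
    simp only [map_mul, ← h1, ← h1']; ring
  have e' := congrArg (eval 0) (RatFunc.algebraMap_injective F e)
  simp only [eval_mul, ← h2, ← h2'] at e'
  apply mul_right_cancel₀ (mul_ne_zero h0 h0')
  linear_combination e'

theorem Sp.ne {F : Type*} [Field F] {a a' : RatFunc F} {b b' : F} (h : Sp a b) (h' : Sp a' b')
    (hb : b ≠ b') : a ≠ a' := by
  rintro rfl
  exact hb (h.unique h')

theorem Sp.inv {F : Type*} [Field F] {a : RatFunc F} {b : F} (h : Sp a b) (hb : b ≠ 0) :
    Sp a⁻¹ b⁻¹ := by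
  have ha : a ≠ 0 := h.ne Sp.zero hb
  obtain ⟨p, q, h0, h1, h2⟩ := h
  refine ⟨q, p, ?_, ?_, ?_⟩
  · rw [← h2]; exact mul_ne_zero hb h0
  · rw [← h1, inv_mul_cancel_left₀ ha]
  · rw [← h2, inv_mul_cancel_left₀ hb]

theorem Sp.div {F : Type*} [Field F] {a a' : RatFunc F} {b b' : F} (h : Sp a b) (h' : Sp a' b')
    (hb : b' ≠ 0) : Sp (a / a') (b / b') := by
  rw [div_eq_mul_inv, div_eq_mul_inv]
  exact h.mul (h'.inv hb)

theorem Sp.sum {F : Type*} [Field F] {α : Type*} (S : Finset α) {f : α → RatFunc F} {g : α → F}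
    (h : ∀ i ∈ S, Sp (f i) (g i)) : Sp (∑ i ∈ S, f i) (∑ i ∈ S, g i) := by
  classical
  induction S using Finset.induction_on with
  | empty => simpa using Sp.zero
  | insert a S ha ih =>
    simp only [Finset.sum_insert ha]
    exact (h a (by simp)).add (ih fun i hi => h i (by simp [hi]))

theorem Sp.prod {F : Type*} [Field F] {α : Type*} (S : Finset α) {f : α → RatFunc F} {g : α → F}
    (h : ∀ i ∈ S, Sp (f i) (g i)) : Sp (∏ i ∈ S, f i) (∏ i ∈ S, g i) := by
  classical
  induction S using Finset.induction_on with
  | empty => simpa using Sp.one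
  | insert a S ha ih =>
    simp only [Finset.prod_insert ha]
    exact (h a (by simp)).mul (ih fun i hi => h i (by simp [hi]))

theorem Sp.pp {F : Type*} [Field F] {ι : Type*} [LinearOrder ι] (S : Finset ι)
    {f : ι → ι → RatFunc F} {g : ι → ι → F} (h : ∀ i j, i ≠ j → Sp (f i j) (g i j)) :
    Sp (PP S f) (PP S g) := by
  refine Sp.prod _ fun i _ => Sp.prod _ fun j _ => ?_
  split_ifs with hij
  · exact h i j hij.ne
  · exact Sp.one

theorem fin_main {F : Type*} [Field F] {ι κ : Type*} [LinearOrder ι] [LinearOrder κ]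
    (x : ι → F) (u : κ → F) (t : F)
    (ht0 : t ≠ 0) (ht2 : ∀ k : ℕ, t ^ k + 1 ≠ 0)
    (hx0 : ∀ i, x i ≠ 0) (hu0 : ∀ k, u k ≠ 0)
    (hx2 : ∀ i, (x i) ^ 2 ≠ 1)
    (hxx : ∀ i j, i ≠ j → x i * x j ≠ 1 ∧ x i ≠ x j)
    (hux : ∀ k i, u k * x i ≠ 1 ∧ u k ≠ x i)
    (huu : ∀ k l, k ≠ l → t * u k * u l ≠ 1 ∧ u k ≠ u l) (S : Finset ι) (U : Finset κ) :
    LH t x u S U = cc t S.card U.card * RH t x u S U := by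
  let A := algebraMap F[X] (RatFunc F)
  have hA : Function.Injective A := RatFunc.algebraMap_injective F
  let x' : ι → RatFunc F := fun i => A (C (x i))
  let u' : κ → RatFunc F := fun k => A (X + C (u k))
  let t' : RatFunc F := A (X + C t)
  have st : Sp t' t := by
    have := Sp.poly (X + C t); rwa [show eval 0 (X + C t) = t by simp] at this
  have sx : ∀ i, Sp (x' i) (x i) := fun i => by
    have := Sp.poly (C (x i)); rwa [eval_C] at this
  have su : ∀ k, Sp (u' k) (u k) := fun k => by
    have := Sp.poly (X + C (u k)); rwa [show eval 0 (X + C (u k)) = u k by simp] at this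
  have hd : ∀ p : F[X], ∀ b : F, 0 < p.natDegree → A p ≠ A (C b) := by
    intro p b hp h
    rw [hA h, natDegree_C] at hp
    exact lt_irrefl _ hp
  have ht0' : t' ≠ 0 := st.ne Sp.zero ht0
  have H : Gen t' x' u' := by
    refine ⟨ht0', fun i => (sx i).ne Sp.zero (hx0 i), fun i => (su i).ne Sp.zero (hu0 i),
      fun i => ((sx i).pow 2).ne Sp.one (hx2 i), fun i j hij => ⟨?_, ?_⟩, fun k i => ⟨?_, ?_⟩,
      fun k l hkl => ⟨?_, ?_⟩, fun i j => ⟨?_, ?_⟩, fun k => ?_, fun k i => ⟨?_, ?_⟩⟩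
    · exact ((sx i).mul (sx j)).ne Sp.one (hxx i j hij).1
    · exact (sx i).ne (sx j) (hxx i j hij).2
    · exact ((su k).mul (sx i)).ne Sp.one (hux k i).1
    · exact (su k).ne (sx i) (hux k i).2
    · exact ((st.mul (su k)).mul (su l)).ne Sp.one (huu k l hkl).1
    · exact (su k).ne (su l) (huu k l hkl).2
    · have := hd (X + C t) (x i * x j) (by simp)
      simpa only [x', t', u', map_mul, map_one] using this
    · have := hd ((X + C t) * C (x i)) (x j) (by rw [natDegree_mul_C (hx0 i)]; simp)
      simpa only [x', t', u', map_mul, map_one] using this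
    · have := hd ((X + C t) * (X + C (u k)) * (X + C (u k))) 1 (by
        rw [natDegree_mul (mul_ne_zero (X_add_C_ne_zero _) (X_add_C_ne_zero _))
          (X_add_C_ne_zero _)]; simp)
      simpa only [x', t', u', map_mul, map_one] using this
    · have := hd ((X + C t) * (X + C (u k))) (x i) (by
        rw [natDegree_mul (X_add_C_ne_zero _) (X_add_C_ne_zero _)]; simp)
      simpa only [x', t', u', map_mul, map_one] using this
    · have := hd ((X + C t) * (X + C (u k)) * C (x i)) 1 (by
        rw [natDegree_mul_C (hx0 i), natDegree_mul (X_add_C_ne_zero _) (X_add_C_ne_zero _)]; simp)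
      simpa only [x', t', u', map_mul, map_one] using this
  have ht2' : ∀ k : ℕ, t' ^ k + 1 ≠ 0 := fun k => ((st.pow k).add Sp.one).ne Sp.zero (ht2 k)
  have main := gen_main H (cc t') (isC_cc t' ht0' ht2') U S
  have sL : Sp (LH t' x' u' S U) (LH t x u S U) := by
    refine Sp.sum _ fun J _ => ?_
    have sy : ∀ i, Sp (yv x' J i) (yv x J i) := fun i => by
      unfold yv; split_ifs
      · exact sx i
      · exact (sx i).inv (hx0 i)
    have y0 : ∀ i, yv x J i ≠ 0 := fun i => by
      unfold yv; split_ifs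
      · exact hx0 i
      · exact inv_ne_zero (hx0 i)
    have y2 : ∀ i, 1 - yv x J i ^ 2 ≠ 0 := fun i => by
      rw [sub_ne_zero, ne_comm]
      unfold yv; split_ifs
      · exact hx2 i
      · simpa using hx2 i
    have yy : ∀ i j, i ≠ j → 1 - yv x J i * yv x J j ≠ 0 := fun i j hij => by
      rw [sub_ne_zero, ne_comm]
      have h1 := hxx i j hij
      unfold yv; split_ifs
      · exact h1.1
      · rw [← div_eq_mul_inv, Ne, div_eq_one_iff_eq (hx0 j)]; exact h1.2
      · rw [mul_comm, ← div_eq_mul_inv, Ne, div_eq_one_iff_eq (hx0 i)]; exact h1.2.symm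
      · rw [← mul_inv, Ne, inv_eq_one]; exact h1.1
    have uy : ∀ k i, 1 - u k / yv x J i ≠ 0 := fun k i => by
      rw [sub_ne_zero, ne_comm]
      unfold yv; split_ifs
      · rw [Ne, div_eq_one_iff_eq (hx0 i)]; exact (hux k i).2
      · rw [div_inv_eq_mul]; exact (hux k i).1
    unfold Tm
    refine (Sp.mul (Sp.prod _ fun i _ => ?_) (Sp.pp _ fun i j hij => ?_)).mul
      (Sp.prod _ fun k _ => Sp.prod _ fun i _ => ?_)
    · exact (Sp.one.sub (st.mul ((sy i).pow 2))).div (Sp.one.sub ((sy i).pow 2)) (y2 i)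
    · exact (Sp.one.sub ((st.mul (sy i)).mul (sy j))).div (Sp.one.sub ((sy i).mul (sy j)))
        (yy i j hij)
    · exact (Sp.one.sub ((st.mul (su k)).div (sy i) (y0 i))).div
        (Sp.one.sub ((su k).div (sy i) (y0 i))) (uy k i)
  have sR : Sp (RH t' x' u' S U) (RH t x u S U) := by
    refine Sp.sum _ fun I _ => ?_
    have sv : ∀ i, Sp (vv t' u' I i) (vv t u I i) := fun i => by
      unfold vv; split_ifs
      · exact su i
      · exact (st.mul (su i)).inv (mul_ne_zero ht0 (hu0 i))
    have sD : ∀ a b, Sp a b → Sp (DD x' S a) (DD x S b) := fun a b h =>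
      Sp.prod _ fun i _ => (Sp.one.sub (h.mul (sx i))).mul (Sp.one.sub (h.div (sx i) (hx0 i)))
    unfold RT
    refine Sp.mul (Sp.pp _ fun i j hij => ?_) (Sp.prod _ fun k _ => ?_)
    · refine (Sp.one.sub ((sv i).mul (sv j))).div (Sp.one.sub ((st.mul (sv i)).mul (sv j))) ?_
      rw [sub_ne_zero, ne_comm]
      have h1 := huu i j hij
      have hi := hu0 i
      have hj := hu0 j
      unfold vv; split_ifs
      · exact h1.1
      · have : t * u i * (t * u j)⁻¹ = u i / u j := by field_simp
        rw [this, Ne, div_eq_one_iff_eq hj]; exact h1.2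
      · have : t * (t * u i)⁻¹ * u j = u j / u i := by field_simp
        rw [this, Ne, div_eq_one_iff_eq hi]; exact h1.2.symm
      · have : t * (t * u i)⁻¹ * (t * u j)⁻¹ = (t * u i * u j)⁻¹ := by field_simp
        rw [this, Ne, inv_eq_one]; exact h1.1
    · unfold hh RR
      split_ifs
      · exact (sD _ _ (st.mul (su k))).div (sD _ _ (su k))
          (DD_ne x S _ (fun i _ => hx0 i) fun i _ => hux k i)
      · exact st.pow _
  have sC : ∀ n r, Sp (cc t' n r) (cc t n r) := fun n r => by
    unfold cc
    split_ifs
    · exact Sp.prod _ fun k _ => (st.pow _).add Sp.one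
    · have hne : ∀ k : ℕ, (t ^ k)⁻¹ + 1 ≠ 0 := fun k => by
        have : (t ^ k)⁻¹ + 1 = (t ^ k + 1) / t ^ k := by
          field_simp; ring
        rw [this]; exact div_ne_zero (ht2 k) (pow_ne_zero _ ht0)
      exact (Sp.prod _ fun k _ => ((st.pow k).inv (pow_ne_zero _ ht0)).add Sp.one).inv
        (Finset.prod_ne_zero_iff.2 fun k _ => hne k)
  rw [main] at sL
  exact sL.unique ((sC _ _).mul sR)

theorem PP_univ {F : Type*} [Field F] {n : ℕ} (f : Fin n → Fin n → F) :
    PP Finset.univ f = ∏ i, ∏ j ∈ Finset.Ioi i, f i j := by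
  unfold PP
  refine Finset.prod_congr rfl fun i _ => ?_
  rw [← Finset.prod_filter]
  congr 1
  ext j; simp

end helpers4


/-- The main multivariate rational identity (Theorem 6):
`T(Φ ∏_{k,i} (1-tu_k/x_i)/(1-u_k/x_i)) = (-t;t)_{n-r} ∑_{I⊆{1,…,r}} c_I ∏_{i∈I} R(u_i)`,
where `T` sums over all substitutions `x_i → x_i^{±1}`,
`c_I = t^{n(r-|I|)} ∏_{i<j} (1-v_iv_j)/(1-tv_iv_j)` with `v_i = u_i` for `i ∈ I`,
`v_i = 1/(tu_i)` otherwise, and `(-t;t)_{n-r} = ∏_{k=1}^{n-r}(t^k+1)` if `r ≤ n`,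
`= (∏_{k=0}^{r-n-1}(t^{-k}+1))⁻¹` if `n < r`. -/
theorem stmt7 {F : Type*} [Field F] {n r : ℕ} (x : Fin n → F) (u : Fin r → F) (t : F)
    (ht0 : t ≠ 0) (ht2 : ∀ k : ℕ, t ^ k + 1 ≠ 0)
    (hx0 : ∀ i, x i ≠ 0) (hu0 : ∀ k, u k ≠ 0)
    (hx2 : ∀ i, (x i) ^ 2 ≠ 1)
    (hxx : ∀ i j, i ≠ j → x i * x j ≠ 1 ∧ x i ≠ x j)
    (hux : ∀ k i, u k * x i ≠ 1 ∧ u k ≠ x i)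
    (huu : ∀ k l, k ≠ l → t * u k * u l ≠ 1 ∧ u k ≠ u l) :
    ∑ σ : Fin n → Bool,
      PhiC t (sgnVar x σ) * ∏ k, ∏ i, (1 - t * u k / sgnVar x σ i) / (1 - u k / sgnVar x σ i)
      = (if r ≤ n then ∏ k ∈ Finset.range (n - r), (t ^ (k + 1) + 1)
          else (∏ k ∈ Finset.range (r - n), ((t ^ k)⁻¹ + 1))⁻¹) *
        ∑ I : Finset (Fin r),
          t ^ (n * (r - I.card)) *
          (∏ i, ∏ j ∈ Finset.Ioi i,
            (1 - (if i ∈ I then u i else (t * u i)⁻¹) * (if j ∈ I then u j else (t * u j)⁻¹)) /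
            (1 - t * (if i ∈ I then u i else (t * u i)⁻¹) *
              (if j ∈ I then u j else (t * u j)⁻¹))) *
          ∏ i ∈ I, RC t x (u i) := by
  have main := fin_main x u t ht0 ht2 hx0 hu0 hx2 hxx hux huu Finset.univ Finset.univ
  rw [Finset.card_univ, Finset.card_univ, Fintype.card_fin, Fintype.card_fin] at main
  unfold cc at main
  have e1 : ∑ σ : Fin n → Bool, PhiC t (sgnVar x σ) *
      ∏ k, ∏ i, (1 - t * u k / sgnVar x σ i) / (1 - u k / sgnVar x σ i) =
      LH t x u Finset.univ Finset.univ := by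
    unfold LH
    rw [Finset.powerset_univ]
    refine Finset.sum_bij' (fun σ _ => Finset.univ.filter fun i => σ i = true)
      (fun J _ i => decide (i ∈ J)) (by simp) (by simp) (by intro σ _; ext i; simp)
      (by intro J _; ext i; simp) ?_
    intro σ _
    have : sgnVar x σ = yv x (Finset.univ.filter fun i => σ i = true) := by
      funext i; simp [sgnVar, yv]
    rw [this]
    unfold Tm PhiC
    rw [PP_univ]
  rw [e1, main]
  congr 1
  unfold RH
  rw [Finset.powerset_univ]
  refine Finset.sum_congr rfl fun I _ => ?_
  unfold RT
  rw [PP_univ]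
  have e2 : ∏ k, hh t x u Finset.univ I k = t ^ (n * (r - I.card)) * ∏ i ∈ I, RC t x (u i) := by
    unfold hh
    rw [Finset.prod_ite, Finset.prod_const, Finset.card_univ, Fintype.card_fin, ← pow_mul, mul_comm]
    congr 1
    · congr 2
      have : (Finset.univ.filter fun k => k ∉ I) = Iᶜ := by ext; simp
      rw [this, Finset.card_compl, Fintype.card_fin]
    · have : (Finset.univ.filter fun k => k ∈ I) = I := by ext; simp
      rw [this]
      refine Finset.prod_congr rfl fun k _ => ?_
      unfold RR DD RC
      rw [← Finset.prod_div_distrib]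
      exact Finset.prod_congr rfl fun i _ => mul_div_mul_comm _ _ _ _
  rw [e2]
  unfold gg vv
  ring
end

section
/- For n variables x_1,…,x_n (nonzero), let h_k denote the complete homogeneous symmetric function of degree k in the 2n quantities x_1,…,x_n,1/x_1,…,1/x_n, i.e. ∑_{k≥0} u^k h_k = ∏_{i=1}^n 1/((1-u x_i)(1-u/x_i)). Then the irreducible character of Sp(2n,ℂ) with highest weight λ_1 ε_1 + λ_2 ε_2 (λ_1 ≥ λ_2 ≥ 0 integers) satisfies χ_{λ_1 ε_1 + λ_2 ε_2} = h_{λ_1} h_{λ_2} + h_{λ_1} h_{λ_2-2} - h_{λ_1+1} h_{λ_2-1} - h_{λ_1-1} h_{λ_2-1}, where h_m = 0 for m < 0. -/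
open Finset

/-- The complete homogeneous symmetric function `h_k` of the `2n` quantities
`x_1,…,x_n, 1/x_1,…,1/x_n`, with `h_k = 0` for `k < 0`. -/
noncomputable def hComplete {F : Type*} [Field F] {n : ℕ} (x : Fin n → F) (k : ℤ) : F :=
  if k < 0 then 0
  else ∑ c ∈ Finset.Nat.antidiagonalTuple (2 * n) k.toNat,
    ∏ a : Fin (2 * n),
      (if h : (a : ℕ) < n then x ⟨a, h⟩ else (x ⟨(a : ℕ) - n, by omega⟩)⁻¹) ^ (c a)

/-- The entry `(λ+ρ)_i` for `λ = λ₁ε₁ + λ₂ε₂` and `ρ = ∑ (n-i+1)ε_i` (1-indexed). -/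
def wtRho (n : ℕ) (lam1 lam2 : ℕ) (i : Fin n) : ℤ :=
  (if (i : ℕ) = 0 then (lam1 : ℤ) else if (i : ℕ) = 1 then (lam2 : ℤ) else 0) +
    (n - (i : ℕ) : ℕ)

open PowerSeries in
lemma geom_mul {F : Type*} [Field F] (z : F) :
    (1 - PowerSeries.C z * PowerSeries.X) * PowerSeries.mk (fun k => z ^ k) = 1 := by
  ext k
  rw [sub_mul, one_mul, mul_assoc]
  rcases k with _ | k
  · simp
  · simp [PowerSeries.coeff_succ_X_mul, PowerSeries.coeff_one, pow_succ']

lemma gen_aux {F : Type*} [Field F] (N : ℕ) (z : Fin N → F) :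
    (∏ a, (1 - PowerSeries.C (z a) * PowerSeries.X)) *
      PowerSeries.mk (fun k => ∑ c ∈ Finset.Nat.antidiagonalTuple N k, ∏ a, z a ^ c a) = 1 := by
  have : PowerSeries.mk (fun k => ∑ c ∈ Finset.Nat.antidiagonalTuple N k, ∏ a, z a ^ c a)
      = ∏ a, PowerSeries.mk (fun k => z a ^ k) := by
    ext k
    rw [PowerSeries.coeff_prod]
    simp only [PowerSeries.coeff_mk]
    refine Finset.sum_nbij' (fun c => Finsupp.equivFunOnFinite.symm c) (fun c => ⇑c) ?_ ?_ ?_ ?_ ?_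
    · intro c hc
      simpa [Finset.Nat.mem_antidiagonalTuple, Finset.mem_finsuppAntidiag] using hc
    · intro c hc
      simpa [Finset.Nat.mem_antidiagonalTuple, Finset.mem_finsuppAntidiag] using hc
    · intro c _; rfl
    · intro c _; ext; rfl
    · intro c _; rfl
  rw [this, ← Finset.prod_mul_distrib]
  exact Finset.prod_eq_one fun a _ => geom_mul _

/-- generating series of `hComplete` -/
noncomputable def hSer {F : Type*} [Field F] {n : ℕ} (x : Fin n → F) : PowerSeries F :=
  PowerSeries.mk (fun k => hComplete x (k : ℤ))

lemma hSer_mul {F : Type*} [Field F] {n : ℕ} (x : Fin n → F) (hx : ∀ i, x i ≠ 0) :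
    (∏ i, (1 + PowerSeries.X ^ 2 - PowerSeries.C (x i + (x i)⁻¹) * PowerSeries.X)) * hSer x = 1 := by
  have h := gen_aux (2 * n) (fun a : Fin (2 * n) =>
    if h : (a : ℕ) < n then x ⟨a, h⟩ else (x ⟨(a : ℕ) - n, by omega⟩)⁻¹)
  have e : (PowerSeries.mk (fun k => ∑ c ∈ Finset.Nat.antidiagonalTuple (2 * n) k,
      ∏ a : Fin (2 * n), (if h : (a : ℕ) < n then x ⟨a, h⟩
        else (x ⟨(a : ℕ) - n, by omega⟩)⁻¹) ^ c a)) = hSer x := by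
    ext k
    simp [hSer, hComplete]
  rw [e] at h
  refine Eq.trans ?_ h
  congr 1
  rw [← (finCongr (two_mul n).symm).prod_comp, Fin.prod_univ_add, ← Finset.prod_mul_distrib]
  refine Finset.prod_congr rfl fun i _ => ?_
  simp only [finCongr_apply, Fin.val_cast, Fin.val_castAdd, Fin.val_natAdd, Fin.is_lt, dite_true,
    Fin.eta, not_lt.mpr (Nat.le_add_right n i), dite_false, Nat.add_sub_cancel_left]
  have : PowerSeries.C (x i) * PowerSeries.C (x i)⁻¹ = 1 := by
    rw [← map_mul, mul_inv_cancel₀ (hx i), map_one]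
  rw [map_add]
  linear_combination (-PowerSeries.X ^ 2) * this

lemma coeff_X_pow_hSer {F : Type*} [Field F] {n : ℕ} (x : Fin n → F) (d k : ℕ) :
    PowerSeries.coeff k (PowerSeries.X ^ d * hSer x) = hComplete x ((k : ℤ) - d) := by
  rw [PowerSeries.coeff_X_pow_mul']
  split_ifs with h
  · simp [hSer, Nat.cast_sub h]
  · rw [hComplete, if_pos (by omega)]

open Polynomial in
lemma exists_G {F : Type*} [Field F] {n : ℕ} (y : Fin n → F) (s : Finset (Fin n)) :
    ∃ G : Polynomial (PowerSeries F),
      Polynomial.C (∏ i ∈ s, (1 + PowerSeries.X ^ 2 - PowerSeries.C (y i) * PowerSeries.X)) =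
        (Polynomial.C (1 + PowerSeries.X ^ 2) - Polynomial.C PowerSeries.X * Polynomial.X) * G
          + Polynomial.C (PowerSeries.X ^ s.card) *
            ∏ i ∈ s, (Polynomial.X - Polynomial.C (PowerSeries.C (y i))) ∧
      (∀ l, s.card ≤ l → G.coeff l = 0) ∧
      (∀ l, l < s.card → ∃ u : PowerSeries F, G.coeff l = PowerSeries.X ^ l * u ∧
        PowerSeries.constantCoeff u = 1) := by
  classical
  induction s using Finset.induction_on with
  | empty => exact ⟨0, by simp, by simp, by simp⟩
  | insert a s ha ih =>
    obtain ⟨G, h1, h2, h3⟩ := ih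
    set Q := ∏ i ∈ s, (Polynomial.X - Polynomial.C (PowerSeries.C (y i))) with hQ
    have hmon : Q.Monic := Polynomial.monic_prod_X_sub_C _ _
    have hdeg : Q.natDegree = s.card := Polynomial.natDegree_finsetProd_X_sub_C_eq_card _ _
    have hc : Q.coeff s.card = 1 := by rw [← hdeg]; exact hmon
    refine ⟨Polynomial.C (1 + PowerSeries.X ^ 2 - PowerSeries.C (y a) * PowerSeries.X) * G +
      Polynomial.C (PowerSeries.X ^ s.card) * Q, ?_, ?_, ?_⟩
    · rw [Finset.prod_insert ha, Finset.prod_insert ha, Finset.card_insert_of_notMem ha, map_mul,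
        h1, ← hQ]
      simp only [map_add, map_sub, map_mul, map_pow, map_one]
      ring
    · intro l hl
      rw [Finset.card_insert_of_notMem ha] at hl
      rw [Polynomial.coeff_add, Polynomial.coeff_C_mul, Polynomial.coeff_C_mul, h2 l (by omega),
        Polynomial.coeff_eq_zero_of_natDegree_lt (by omega : Q.natDegree < l)]
      simp
    · intro l hl
      rw [Finset.card_insert_of_notMem ha] at hl
      rw [Polynomial.coeff_add, Polynomial.coeff_C_mul, Polynomial.coeff_C_mul]
      rcases Nat.lt_succ_iff_lt_or_eq.mp hl with hl | rfl
      · obtain ⟨u, hu, hu1⟩ := h3 l hl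
        refine ⟨(1 + PowerSeries.X ^ 2 - PowerSeries.C (y a) * PowerSeries.X) * u +
          PowerSeries.X ^ (s.card - l) * Q.coeff l, ?_, ?_⟩
        · have : (PowerSeries.X : PowerSeries F) ^ s.card =
            PowerSeries.X ^ l * PowerSeries.X ^ (s.card - l) := by
            rw [← pow_add]; congr 1; omega
          rw [hu, this]; ring
        · have : s.card - l ≠ 0 := by omega
          simp [hu1, this]
      · exact ⟨1, by rw [h2 _ le_rfl, hc]; simp, by simp⟩

/-- The coefficient series, and their key properties. -/
lemma exists_g {F : Type*} [Field F] {N : ℕ} (y : Fin (N + 2) → F) :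
    ∃ (g : ℕ → PowerSeries F) (q : F),
      (∀ i, ∏ i, (1 + PowerSeries.X ^ 2 - PowerSeries.C (y i) * PowerSeries.X) =
        (1 + PowerSeries.X ^ 2 - PowerSeries.C (y i) * PowerSeries.X) *
          ∑ l ∈ Finset.range (N + 2), g l * PowerSeries.C (y i) ^ l) ∧
      g (N + 1) = PowerSeries.X ^ (N + 1) ∧
      g N = PowerSeries.X ^ N * (1 + PowerSeries.X ^ 2 + PowerSeries.C q * PowerSeries.X) ∧
      (∀ l, l < N + 2 → ∃ u : PowerSeries F, g l = PowerSeries.X ^ l * u ∧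
        PowerSeries.constantCoeff u = 1) := by
  obtain ⟨G, h1, h2, h3⟩ := exists_G y Finset.univ
  rw [Finset.card_univ, Fintype.card_fin] at h1 h2 h3
  set Q := ∏ i, (Polynomial.X - Polynomial.C (PowerSeries.C (y i))) with hQ
  have hmon : Q.Monic := Polynomial.monic_prod_X_sub_C _ _
  have hdeg : Q.natDegree = N + 2 := by
    rw [hQ, Polynomial.natDegree_finsetProd_X_sub_C_eq_card Finset.univ
      (fun i => PowerSeries.C (y i)), Finset.card_univ, Fintype.card_fin]
  have hc : Q.coeff (N + 2) = 1 := by rw [← hdeg]; exact hmon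
  have hq : ∃ q : F, Q.coeff (N + 1) = PowerSeries.C q := by
    refine ⟨(∏ i, (Polynomial.X - Polynomial.C (y i))).coeff (N + 1), ?_⟩
    rw [← Polynomial.coeff_map, Polynomial.map_prod]
    simp [hQ]
  obtain ⟨q, hq⟩ := hq
  have hX : (PowerSeries.X : PowerSeries F) ≠ 0 := PowerSeries.X_ne_zero
  have e : ∀ m, 0 = (1 + PowerSeries.X ^ 2) * G.coeff (m + 1) - PowerSeries.X * G.coeff m
      + PowerSeries.X ^ (N + 2) * Q.coeff (m + 1) := by
    intro m
    have := congrArg (fun p => Polynomial.coeff p (m + 1)) h1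
    simp only [Polynomial.coeff_C_succ, Polynomial.coeff_add, sub_mul, Polynomial.coeff_sub,
      Polynomial.coeff_C_mul, mul_assoc, Polynomial.coeff_X_mul] at this
    exact this
  have g1 : G.coeff (N + 1) = PowerSeries.X ^ (N + 1) := by
    have := e (N + 1)
    rw [h2 _ le_rfl, hc] at this
    apply mul_left_cancel₀ hX
    linear_combination this
  have g0 : G.coeff N =
      PowerSeries.X ^ N * (1 + PowerSeries.X ^ 2 + PowerSeries.C q * PowerSeries.X) := by
    have := e N
    rw [g1, hq] at this
    apply mul_left_cancel₀ hX
    linear_combination this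
  have hGd : G.natDegree < N + 2 := by
    have : G.natDegree ≤ N + 1 :=
      Polynomial.natDegree_le_iff_coeff_eq_zero.2 fun l hl => h2 l (by omega)
    omega
  refine ⟨G.coeff, q, fun i => ?_, g1, g0, h3⟩
  have := congrArg (Polynomial.eval (PowerSeries.C (y i))) h1
  have hz : Polynomial.eval (PowerSeries.C (y i)) Q = 0 := by
    rw [hQ, Polynomial.eval_prod]
    exact Finset.prod_eq_zero (Finset.mem_univ i) (by simp)
  rw [Polynomial.eval_C, Polynomial.eval_add, Polynomial.eval_mul, Polynomial.eval_mul, hz,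
    Polynomial.eval_eq_sum_range' (n := N + 2)
      hGd] at this
  rw [this]; simp only [Polynomial.eval_sub, Polynomial.eval_C, Polynomial.eval_mul, Polynomial.eval_X]
  ring

lemma a_ser {F : Type*} [Field F] (x : F) (hx : x ≠ 0) :
    (1 + PowerSeries.X ^ 2 - PowerSeries.C (x + x⁻¹) * PowerSeries.X) *
      PowerSeries.mk (fun k => x ^ (k + 1) - x⁻¹ ^ (k + 1)) = PowerSeries.C (x - x⁻¹) := by
  have h1 := geom_mul x
  have h2 := geom_mul x⁻¹
  have h3 : PowerSeries.mk (fun k => x ^ (k + 1) - x⁻¹ ^ (k + 1)) =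
      PowerSeries.C x * PowerSeries.mk (fun k => x ^ k) -
      PowerSeries.C x⁻¹ * PowerSeries.mk (fun k => x⁻¹ ^ k) := by
    ext k; simp [pow_succ']
  have h4 : PowerSeries.C x * PowerSeries.C x⁻¹ = 1 := by
    rw [← map_mul, mul_inv_cancel₀ hx, map_one]
  have h5 : (1 + PowerSeries.X ^ 2 - PowerSeries.C (x + x⁻¹) * PowerSeries.X) =
    (1 - PowerSeries.C x * PowerSeries.X) * (1 - PowerSeries.C x⁻¹ * PowerSeries.X) := by
    rw [map_add]; linear_combination (-PowerSeries.X ^ 2) * h4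
  rw [h3, h5, map_sub]
  linear_combination (PowerSeries.C x * (1 - PowerSeries.C x⁻¹ * PowerSeries.X)) * h1 -
    (PowerSeries.C x⁻¹ * (1 - PowerSeries.C x * PowerSeries.X)) * h2

lemma det_two {F : Type*} [Field F] {N : ℕ} (C : Matrix (Fin (N + 2)) (Fin (N + 2)) F)
    (h0 : ∀ i j : Fin (N + 2), 2 ≤ (j : ℕ) → i < j → C i j = 0)
    (h1 : ∀ j : Fin (N + 2), 2 ≤ (j : ℕ) → C j j = 1) :
    C.det = C 0 0 * C 1 1 - C 0 1 * C 1 0 := by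
  have t0 : (C.submatrix Fin.succ (Fin.succAbove 0)).det = C 1 1 := by
    rw [Matrix.det_of_isLowerTriangular, Fin.prod_univ_succ, Finset.prod_eq_one]
    · simp
    · intro i _
      simp only [Matrix.submatrix_apply, Fin.succAbove_zero]
      exact h1 _ (by simp)
    · intro i j hij
      have hij : i < j := hij
      simp only [Matrix.submatrix_apply, Fin.succAbove_zero]
      apply h0 _ _ _ (Fin.succ_lt_succ_iff.2 hij)
      have : (i : ℕ) < j := hij
      simp; omega
  have t1 : (C.submatrix Fin.succ (Fin.succAbove 1)).det = C 1 0 := by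
    have hs : ∀ j : Fin N, Fin.succAbove (1 : Fin (N + 2)) j.succ = j.succ.succ := by
      intro j
      rw [Fin.succAbove_of_le_castSucc]
      simp [Fin.le_def]
    rw [Matrix.det_of_isLowerTriangular, Fin.prod_univ_succ, Finset.prod_eq_one]
    · simp
    · intro i _
      simp only [Matrix.submatrix_apply, hs]
      exact h1 _ (by simp)
    · intro i j hij
      have hij : i < j := hij
      obtain ⟨k, rfl⟩ := Fin.exists_succ_eq.2 (Fin.ne_zero_of_lt hij)
      simp only [Matrix.submatrix_apply, hs]
      exact h0 _ _ (by simp) (Fin.succ_lt_succ_iff.2 hij)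
  rw [Matrix.det_succ_row_zero, Fin.sum_univ_succ, Fin.sum_univ_succ, Finset.sum_eq_zero]
  · simp only [Fin.succ_zero_eq_one, t0, t1]
    simp
    ring
  · intro j _
    rw [h0 0 j.succ.succ (by simp) (by simp [Fin.lt_def])]
    simp

lemma lhs_det {F : Type*} [Field F] {n : ℕ} (x : Fin n → F) (m : Fin n → ℤ) :
    ∑ π : Equiv.Perm (Fin n), ∑ ε : Fin n → Bool,
      ((Equiv.Perm.sign π : ℤ) : F) *
        (-1) ^ ((Finset.univ.filter (fun i => ε i = false)).card) *
        ∏ i, (x (π i)) ^ (if ε i then m i else -(m i))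
      = (Matrix.of fun i j => x i ^ m j - x i ^ (-m j)).det := by
  rw [Matrix.det_apply']
  refine Finset.sum_congr rfl fun π _ => ?_
  simp_rw [mul_assoc]
  rw [← Finset.mul_sum]
  congr 1
  have : ∀ i, (Matrix.of fun i j => x i ^ m j - x i ^ (-m j)) (π i) i =
      ∑ b : Bool, (if b = false then (-1 : F) else 1) * x (π i) ^ (if b then m i else - m i) := by
    intro i; simp; ring
  simp_rw [this]
  rw [Finset.prod_univ_sum, Fintype.piFinset_univ]
  refine Finset.sum_congr rfl fun ε _ => ?_
  rw [Finset.prod_mul_distrib, Finset.prod_ite]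
  simp

/-- Weyl's two-row symplectic character formula: with
`δ(x) = ∏_i (x_i - x_i⁻¹) ∏_{i<j} (x_i + x_i⁻¹ - x_j - x_j⁻¹)`, the alternating sum
`∑_{w ∈ W} ε(w) x^{w(λ+ρ)}` over the hyperoctahedral group equals
`δ · (h_{λ₁}h_{λ₂} + h_{λ₁}h_{λ₂-2} - h_{λ₁+1}h_{λ₂-1} - h_{λ₁-1}h_{λ₂-1})`,
i.e. `χ_{λ₁ε₁+λ₂ε₂} = h_{λ₁}h_{λ₂} + h_{λ₁}h_{λ₂-2} - h_{λ₁+1}h_{λ₂-1} - h_{λ₁-1}h_{λ₂-1}`. -/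
theorem stmt11 {F : Type*} [Field F] {n : ℕ} (hn : 2 ≤ n) (x : Fin n → F)
    (hx : ∀ i, x i ≠ 0) (lam1 lam2 : ℕ) (hlam : lam2 ≤ lam1) :
    ∑ π : Equiv.Perm (Fin n), ∑ ε : Fin n → Bool,
      ((Equiv.Perm.sign π : ℤ) : F) *
        (-1) ^ ((Finset.univ.filter (fun i => ε i = false)).card) *
        ∏ i, (x (π i)) ^ (if ε i then wtRho n lam1 lam2 i else -(wtRho n lam1 lam2 i))
      = ((∏ i, (x i - (x i)⁻¹)) *
          ∏ i, ∏ j ∈ Finset.Ioi i, (x i + (x i)⁻¹ - x j - (x j)⁻¹)) *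
        (hComplete x lam1 * hComplete x lam2 +
          hComplete x lam1 * hComplete x ((lam2 : ℤ) - 2) -
          hComplete x ((lam1 : ℤ) + 1) * hComplete x ((lam2 : ℤ) - 1) -
          hComplete x ((lam1 : ℤ) - 1) * hComplete x ((lam2 : ℤ) - 1)) := by
  rw [lhs_det]
  obtain ⟨N, rfl⟩ : ∃ N, n = N + 2 := ⟨n - 2, by omega⟩
  obtain ⟨g, q, hg, g1, g0, gl⟩ := exists_g (fun i => x i + (x i)⁻¹)
  have hH := hSer_mul x hx
  set P := ∏ i, (1 + PowerSeries.X ^ 2 - PowerSeries.C (x i + (x i)⁻¹) * PowerSeries.X) with hP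
  -- the expansion of `x^(k+1) - x^(-(k+1))`
  have key : ∀ (i : Fin (N + 2)) (k : ℕ), x i ^ (k + 1) - (x i)⁻¹ ^ (k + 1) =
      (x i - (x i)⁻¹) * ∑ l ∈ Finset.range (N + 2),
        (x i + (x i)⁻¹) ^ l * PowerSeries.coeff k (g l * hSer x) := by
    intro i k
    have ha := a_ser (x i) (hx i)
    have hs : PowerSeries.mk (fun k => x i ^ (k + 1) - (x i)⁻¹ ^ (k + 1)) =
        PowerSeries.C (x i - (x i)⁻¹) * ∑ l ∈ Finset.range (N + 2),
          PowerSeries.C ((x i + (x i)⁻¹) ^ l) * (g l * hSer x) := by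
      have e1 : ∑ l ∈ Finset.range (N + 2), PowerSeries.C ((x i + (x i)⁻¹) ^ l) * (g l * hSer x) =
          (∑ l ∈ Finset.range (N + 2), g l * PowerSeries.C (x i + (x i)⁻¹) ^ l) * hSer x := by
        rw [Finset.sum_mul]
        refine Finset.sum_congr rfl fun l _ => ?_
        rw [map_pow]; ring
      rw [e1, ← ha]
      have h := hg i
      set S := ∑ l ∈ Finset.range (N + 2), g l * PowerSeries.C (x i + (x i)⁻¹) ^ l
      rw [h] at hH
      linear_combination (-PowerSeries.mk (fun k => x i ^ (k + 1) - (x i)⁻¹ ^ (k + 1))) * hH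
    have := congrArg (PowerSeries.coeff k) hs
    simpa only [PowerSeries.coeff_mk, PowerSeries.coeff_C_mul, map_sum] using this
  let kk : Fin (N + 2) → ℕ := fun j =>
    (if (j : ℕ) = 0 then lam1 else if (j : ℕ) = 1 then lam2 else 0) + (N + 1 - j)
  have hkk : ∀ j, wtRho (N + 2) lam1 lam2 j = ((kk j + 1 : ℕ) : ℤ) := by
    intro j
    have := j.2
    simp only [wtRho, kk]
    split_ifs <;> push_cast <;> omega
  let C : Matrix (Fin (N + 2)) (Fin (N + 2)) F := Matrix.of fun r j =>
    PowerSeries.coeff (kk j) (g (r.rev : ℕ) * hSer x)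
  have hM : (Matrix.of fun i j => x i ^ wtRho (N + 2) lam1 lam2 j -
        x i ^ (-wtRho (N + 2) lam1 lam2 j)) =
      Matrix.of fun i j => (x i - (x i)⁻¹) *
        (Matrix.projVandermonde (fun _ => (1 : F)) (fun i => x i + (x i)⁻¹) * C) i j := by
    ext i j
    simp only [Matrix.of_apply]
    rw [hkk, zpow_neg, zpow_natCast, ← inv_pow, key, Matrix.mul_apply,
      ← Fin.sum_univ_eq_sum_range
        (fun l => (x i + (x i)⁻¹) ^ l * PowerSeries.coeff (kk j) (g l * hSer x)),
      ← Equiv.sum_comp Fin.revPerm]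
    simp [Matrix.projVandermonde_apply, C]
  have h00 : PowerSeries.constantCoeff (hSer x) = 1 := by
    have := congrArg PowerSeries.constantCoeff hH
    simpa [hP, map_prod] using this
  have hdet : C.det = C 0 0 * C 1 1 - C 0 1 * C 1 0 := by
    apply det_two
    · intro i j hj hij
      have hij : (i : ℕ) < j := hij
      obtain ⟨u, hu, -⟩ := gl (i.rev : ℕ) i.rev.2
      simp only [C, Matrix.of_apply]
      rw [hu, mul_assoc, PowerSeries.coeff_X_pow_mul', if_neg]
      simp only [kk, Fin.val_rev]
      split_ifs <;> omega
    · intro j hj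
      obtain ⟨u, hu, hu1⟩ := gl (j.rev : ℕ) j.rev.2
      have : kk j = (j.rev : ℕ) := by
        simp only [kk, Fin.val_rev]
        split_ifs <;> omega
      simp only [C, Matrix.of_apply]
      rw [hu, mul_assoc, PowerSeries.coeff_X_pow_mul', this]
      simp [hu1, h00]
  have k0 : kk 0 = lam1 + (N + 1) := by simp [kk]
  have k1 : kk 1 = lam2 + N := by simp [kk]
  have r0 : ∀ j, C 0 j = hComplete x ((kk j : ℤ) - (N + 1)) := by
    intro j
    simp only [C, Matrix.of_apply]
    have : ((0 : Fin (N + 2)).rev : ℕ) = N + 1 := by simp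
    rw [this, g1, coeff_X_pow_hSer]
    push_cast; rfl
  have r1 : ∀ j, C 1 j = hComplete x ((kk j : ℤ) - N) + hComplete x ((kk j : ℤ) - (N + 2)) +
      q * hComplete x ((kk j : ℤ) - (N + 1)) := by
    intro j
    simp only [C, Matrix.of_apply]
    have : ((1 : Fin (N + 2)).rev : ℕ) = N := by simp [Fin.val_rev]
    have e : PowerSeries.X ^ N * (1 + PowerSeries.X ^ 2 + PowerSeries.C q * PowerSeries.X) * hSer x
      = PowerSeries.X ^ N * hSer x + PowerSeries.X ^ (N + 2) * hSer x +
        PowerSeries.C q * (PowerSeries.X ^ (N + 1) * hSer x) := by ring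
    rw [this, g0, e, map_add, map_add, PowerSeries.coeff_C_mul, coeff_X_pow_hSer,
      coeff_X_pow_hSer, coeff_X_pow_hSer]
    push_cast; rfl
  rw [hM, Matrix.det_mul_column, Matrix.det_mul, Matrix.det_projVandermonde, hdet, r0, r0, r1, r1,
    k0, k1]
  have a1 : ((lam1 + (N + 1) : ℕ) : ℤ) - (N + 1) = lam1 := by push_cast; ring
  have a2 : ((lam1 + (N + 1) : ℕ) : ℤ) - N = lam1 + 1 := by push_cast; ring
  have a3 : ((lam1 + (N + 1) : ℕ) : ℤ) - (N + 2) = lam1 - 1 := by push_cast; ring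
  have b1 : ((lam2 + N : ℕ) : ℤ) - (N + 1) = lam2 - 1 := by push_cast; ring
  have b2 : ((lam2 + N : ℕ) : ℤ) - N = lam2 := by push_cast; ring
  have b3 : ((lam2 + N : ℕ) : ℤ) - (N + 2) = lam2 - 2 := by push_cast; ring
  rw [a1, a2, a3, b1, b2, b3]
  have v : ∀ i j : Fin (N + 2), (1 : F) * (x i + (x i)⁻¹) - 1 * (x j + (x j)⁻¹) =
      x i + (x i)⁻¹ - x j - (x j)⁻¹ := by intro i j; ring
  simp only [v]
  ring
end
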